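/- Let a ≥ 0 and let (q,r) be an a-admissible pair, with conjugate exponents q', r'. There exists a constant C(a,r) > 0 such that for every F ∈ 𝕊⁺, the function T_a^⋆T_a(F)(x,t) = ∫_ℝ ∫₀^∞ S_a(x,y,t−τ) F(y,τ) y^a dy dτ satisfies ‖T_a^⋆T_a(F)‖_{L^q_t L^r_a} ≤ C(a,r) ‖F‖_{L^{q'}_t L^{r'}_a}. -/

import Mathlib

open MeasureTheory Filter Set

noncomputable def besselJ (ν : ℂ) (z : ℝ) : ℂ :=
  ∑' k : ℕ, ((-1 : ℂ) ^ k / (Complex.Gamma (k + 1) * Complex.Gamma (ν + k + 1))) *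
    ((z : ℂ) / 2) ^ (2 * (k : ℂ) + ν)

noncomputable def Skernel (a x y t : ℝ) : ℂ :=
  if 0 < t then
    Complex.exp (-(Complex.I) * (((a + 1) * Real.pi / 4 : ℝ) : ℂ)) *
      (((2 * |t|) ^ (-(a + 1) / 2) : ℝ) : ℂ) *
      (((x * y / (2 * |t|)) ^ ((1 - a) / 2) : ℝ) : ℂ) *
      besselJ (((a - 1) / 2 : ℝ) : ℂ) (x * y / (2 * |t|)) *
      Complex.exp (Complex.I * ((((x ^ 2 + y ^ 2) / (4 * |t|)) : ℝ) : ℂ))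
  else
    Complex.exp ((Complex.I) * (((a + 1) * Real.pi / 4 : ℝ) : ℂ)) *
      (((2 * |t|) ^ (-(a + 1) / 2) : ℝ) : ℂ) *
      (((x * y / (2 * |t|)) ^ ((1 - a) / 2) : ℝ) : ℂ) *
      besselJ (((a - 1) / 2 : ℝ) : ℂ) (x * y / (2 * |t|)) *
      Complex.exp (-(Complex.I) * ((((x ^ 2 + y ^ 2) / (4 * |t|)) : ℝ) : ℂ))

noncomputable def LrA (a r : ℝ) (f : ℝ → ℂ) : ℝ :=
  (∫ x in Ioi (0:ℝ), ‖f x‖ ^ r * x ^ a) ^ (1 / r)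

noncomputable def mixedNorm (a q r : ℝ) (u : ℝ → ℝ → ℂ) : ℝ :=
  (∫ t : ℝ, LrA a r (fun x => u x t) ^ q) ^ (1 / q)

def Admissible (a q r : ℝ) : Prop :=
  2 < r ∧ (1 < a → r < 2 * (a + 1) / (a - 1)) ∧ 2 / q = (a + 1) * (1 / 2 - 1 / r)

noncomputable def DxIter : ℕ → (ℝ → ℝ → ℂ) → (ℝ → ℝ → ℂ)
  | 0, F => F
  | k + 1, F => fun x t => (1 / (x : ℂ)) * deriv (fun x' => DxIter k F x' t) x

noncomputable def DtIter (l : ℕ) (F : ℝ → ℝ → ℂ) : ℝ → ℝ → ℂ :=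
  fun x t => iteratedDeriv l (fun t' => F x t') t

def SPlusT (F : ℝ → ℝ → ℂ) : Prop :=
  ContDiffOn ℝ (⊤ : ℕ∞) (fun p : ℝ × ℝ => F p.1 p.2) (Ioi 0 ×ˢ univ) ∧
  ∀ p : ℕ, ∃ C : ℝ, ∀ k l : ℕ, k + l ≤ p → ∀ x > (0:ℝ), ∀ t : ℝ,
    (1 + x ^ 2 + t ^ 2) ^ ((p : ℝ) / 2) * ‖DxIter k (DtIter l F) x t‖ ≤ C

open scoped ENNReal NNReal Topology

/-- The entire function `w ↦ ∑ (-w)^k / (k! Γ(ν+k+1))`, so that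
`J_ν(z) = (z/2)^ν * besselEntire ν (z²/4)`. -/
noncomputable def besselEntire (ν w : ℝ) : ℝ :=
  ∑' k : ℕ, (-w) ^ k / (k.factorial * Real.Gamma (ν + k + 1))

lemma half_gamma_le_gamma_add {ν : ℝ} (hν : -1 / 2 ≤ ν) (k : ℕ) :
    Real.Gamma (ν + 1) / 2 ≤ Real.Gamma (ν + k + 1) := by
  have h0 : 0 < Real.Gamma (ν + 1) := Real.Gamma_pos_of_pos (by linarith)
  induction k with
  | zero => simp only [Nat.cast_zero, add_zero]; linarith
  | succ k ih =>
    have hk : (0 : ℝ) ≤ k := Nat.cast_nonneg k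
    have e : Real.Gamma (ν + (k + 1 : ℕ) + 1) = (ν + k + 1) * Real.Gamma (ν + k + 1) := by
      rw [← Real.Gamma_add_one (by linarith)]
      push_cast
      ring_nf
    rw [e]
    rcases Nat.eq_zero_or_pos k with rfl | hk'
    · simp only [Nat.cast_zero, add_zero]
      nlinarith
    · have : (1 : ℝ) ≤ k := by exact_mod_cast hk'
      nlinarith

lemma norm_besselEntire_term_le {ν : ℝ} (hν : -1 / 2 ≤ ν) (w : ℝ) (k : ℕ) :
    ‖(-w) ^ k / (k.factorial * Real.Gamma (ν + k + 1))‖ ≤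
      2 / Real.Gamma (ν + 1) * (|w| ^ k / k.factorial) := by
  have h0 : 0 < Real.Gamma (ν + 1) := Real.Gamma_pos_of_pos (by linarith)
  have h1 := half_gamma_le_gamma_add hν k
  have h2 : 0 < Real.Gamma (ν + k + 1) := by linarith
  have h3 : (0 : ℝ) < k.factorial := by positivity
  rw [norm_div, norm_mul, norm_pow, norm_neg, Real.norm_eq_abs, Real.norm_of_nonneg h3.le,
    Real.norm_of_nonneg h2.le, div_mul_div_comm]
  rw [div_le_div_iff₀ (by positivity) (by positivity)]
  have : 0 ≤ |w| ^ k * k.factorial := by positivity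
  nlinarith

lemma summable_besselEntire {ν : ℝ} (hν : -1 / 2 ≤ ν) (w : ℝ) :
    Summable fun k : ℕ => (-w) ^ k / (k.factorial * Real.Gamma (ν + k + 1)) :=
  .of_norm_bounded ((Real.summable_pow_div_factorial |w|).mul_left _)
    (norm_besselEntire_term_le hν w)

lemma besselEntire_term_succ (ν w : ℝ) (k : ℕ) :
    ((k + 1 : ℕ) : ℝ) * (-w) ^ k * (-1) /
      ((k + 1).factorial * Real.Gamma (ν + (k + 1 : ℕ) + 1)) =
    -((-w) ^ k / (k.factorial * Real.Gamma (ν + 1 + k + 1))) := by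
  have h3 : (k.factorial : ℝ) ≠ 0 := by positivity
  have h4 : (k : ℝ) + 1 ≠ 0 := by positivity
  rw [Nat.factorial_succ]
  push_cast
  rw [show ν + (k + 1) + 1 = ν + 1 + k + 1 by ring, mul_assoc ((k : ℝ) + 1), mul_assoc,
    mul_div_mul_left _ _ h4]
  ring

lemma hasDerivAt_besselEntire {ν : ℝ} (hν : -1 / 2 ≤ ν) (w : ℝ) :
    HasDerivAt (besselEntire ν) (-besselEntire (ν + 1) w) w := by
  have key := hasDerivAt_tsum_of_isPreconnected (𝕜 := ℝ) (F := ℝ)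
    (u := fun k : ℕ => (k : ℝ) * (|w| + 1) ^ (k - 1) / k.factorial * (2 / Real.Gamma (ν + 1)))
    (g := fun (k : ℕ) (w : ℝ) => (-w) ^ k / (k.factorial * Real.Gamma (ν + k + 1)))
    (g' := fun (k : ℕ) (w : ℝ) =>
      (k : ℝ) * (-w) ^ (k - 1) * (-1) / (k.factorial * Real.Gamma (ν + k + 1)))
    (t := Metric.ball 0 (|w| + 1)) (y₀ := 0) (y := w) ?_ Metric.isOpen_ball
    (convex_ball _ _).isPreconnected ?_ ?_ (by simp; positivity) (summable_besselEntire hν 0)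
    (by simp)
  · refine HasDerivAt.congr_deriv key ?_
    have hs : Summable fun k : ℕ => (k : ℝ) * (-w) ^ (k - 1) * (-1) /
        (k.factorial * Real.Gamma (ν + k + 1)) := by
      rw [← summable_nat_add_iff 1]
      simp only [Nat.add_sub_cancel, besselEntire_term_succ]
      exact (summable_besselEntire (by linarith) w).neg
    rw [hs.tsum_eq_zero_add]
    simp only [Nat.add_sub_cancel, besselEntire_term_succ, tsum_neg]
    simp [besselEntire]
  · rw [← summable_nat_add_iff 1]
    apply Summable.mul_right
    refine (Real.summable_pow_div_factorial (|w| + 1)).congr fun k => ?_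
    rw [Nat.factorial_succ]
    push_cast
    rw [mul_div_mul_left _ _ (by positivity)]
  · intro k y _
    exact (((hasDerivAt_id y).neg.pow k).div_const _)
  · intro k y hy
    have hy' : |y| ≤ |w| + 1 := by simpa using (Metric.mem_ball.1 hy).le
    have h0 : 0 < Real.Gamma (ν + 1) := Real.Gamma_pos_of_pos (by linarith)
    have h1 := half_gamma_le_gamma_add hν k
    have h2 : 0 < Real.Gamma (ν + k + 1) := by linarith
    have h3 : (0 : ℝ) < k.factorial := by positivity
    simp only [norm_div, norm_mul, norm_pow, norm_neg, Real.norm_eq_abs, abs_of_pos h3,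
      abs_of_pos h2, Nat.abs_cast, abs_one, mul_one]
    calc (k : ℝ) * |y| ^ (k - 1) / (k.factorial * Real.Gamma (ν + k + 1))
        ≤ k * (|w| + 1) ^ (k - 1) / (k.factorial * (Real.Gamma (ν + 1) / 2)) := by gcongr
      _ = _ := by field_simp

lemma besselEntire_recurrence {ν : ℝ} (hν : -1 / 2 ≤ ν) (w : ℝ) :
    w * besselEntire (ν + 2) w = (ν + 1) * besselEntire (ν + 1) w - besselEntire ν w := by
  have s0 := summable_besselEntire hν w
  have s1 := (summable_besselEntire (ν := ν + 1) (by linarith) w).mul_left (ν + 1)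
  have hterm : ∀ k : ℕ, (ν + 1) * ((-w) ^ k / (k.factorial * Real.Gamma (ν + 1 + k + 1))) -
      (-w) ^ k / (k.factorial * Real.Gamma (ν + k + 1)) =
      -(k * (-w) ^ k / (k.factorial * Real.Gamma (ν + 1 + k + 1))) := by
    intro k
    have hk : (0 : ℝ) ≤ k := Nat.cast_nonneg k
    have h3 : (k.factorial : ℝ) ≠ 0 := by positivity
    have hΓ : Real.Gamma (ν + k + 1) ≠ 0 := (Real.Gamma_pos_of_pos (by linarith)).ne'
    rw [show ν + 1 + (k : ℝ) + 1 = (ν + k + 1) + 1 by ring,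
      Real.Gamma_add_one (by linarith)]
    have : ν + k + 1 ≠ 0 := by linarith
    field_simp
    ring
  unfold besselEntire
  rw [← tsum_mul_left, ← tsum_mul_left, ← s1.tsum_sub s0, (s1.sub s0).tsum_eq_zero_add]
  simp only [hterm]
  simp only [Nat.cast_zero, zero_mul, zero_div, neg_zero, zero_add]
  refine tsum_congr fun k => ?_
  have h4 : (k : ℝ) + 1 ≠ 0 := by positivity
  rw [Nat.factorial_succ]
  push_cast
  rw [show ν + 1 + ((k : ℝ) + 1) + 1 = ν + 2 + k + 1 by ring, mul_assoc ((k : ℝ) + 1),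
    mul_div_mul_left _ _ h4, pow_succ]
  ring

lemma abs_besselEntire_le {ν : ℝ} (hν : -1 / 2 ≤ ν) {w : ℝ} (hw : 0 ≤ w) :
    |besselEntire ν w| ≤ besselEntire ν 0 := by
  have hpos : 0 ≤ besselEntire ν 0 := by
    refine tsum_nonneg fun k => ?_
    have : 0 < Real.Gamma (ν + k + 1) := Real.Gamma_pos_of_pos (by
      have hk : (0 : ℝ) ≤ k := Nat.cast_nonneg k
      linarith)
    rw [neg_zero]
    positivity
  have hd : ∀ v, HasDerivAt (fun v => besselEntire ν v ^ 2 + v * besselEntire (ν + 1) v ^ 2)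
      (-(2 * ν + 1) * besselEntire (ν + 1) v ^ 2) v := by
    intro v
    have h := ((hasDerivAt_besselEntire hν v).pow 2).add
      ((hasDerivAt_id v).mul ((hasDerivAt_besselEntire (ν := ν + 1) (by linarith) v).pow 2))
    refine HasDerivAt.congr_deriv h ?_
    have hr := besselEntire_recurrence hν v
    rw [show ν + 1 + 1 = ν + 2 by ring]
    simp only [id, Nat.cast_ofNat, Nat.add_one_sub_one, pow_one, Pi.pow_apply]
    linear_combination (-2 * besselEntire (ν + 1) v) * hr
  have hanti : Antitone fun v => besselEntire ν v ^ 2 + v * besselEntire (ν + 1) v ^ 2 :=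
    antitone_of_hasDerivAt_nonpos hd fun v => by
      have : 0 ≤ (2 * ν + 1) * besselEntire (ν + 1) v ^ 2 :=
        mul_nonneg (by linarith) (sq_nonneg _)
      simp only [Pi.zero_apply]
      linarith
  have := hanti hw
  simp only [zero_mul, add_zero] at this
  exact abs_le_of_sq_le_sq (by nlinarith [mul_nonneg hw (sq_nonneg (besselEntire (ν + 1) w))]) hpos

lemma continuous_besselEntire {ν : ℝ} (hν : -1 / 2 ≤ ν) : Continuous (besselEntire ν) :=
  continuous_iff_continuousAt.2 fun w => (hasDerivAt_besselEntire hν w).continuousAt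

lemma besselJ_term (ν z : ℝ) (hz : 0 < z) (k : ℕ) :
    ((-1 : ℂ) ^ k / (Complex.Gamma (k + 1) * Complex.Gamma ((ν : ℂ) + k + 1))) *
      ((z : ℂ) / 2) ^ (2 * (k : ℂ) + ν) =
    (((z / 2) ^ ν * ((-(z ^ 2 / 4)) ^ k / (k.factorial * Real.Gamma (ν + k + 1))) : ℝ) : ℂ) := by
  have hz2 : (0 : ℝ) < z / 2 := by positivity
  have e1 : ((z : ℂ) / 2) ^ (2 * (k : ℂ) + ν) = (((z / 2) ^ ν * (z / 2) ^ (2 * k) : ℝ) : ℂ) := by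
    rw [show (z : ℂ) / 2 = ((z / 2 : ℝ) : ℂ) by push_cast; rfl,
      show 2 * (k : ℂ) + ν = ((ν + (2 * k : ℕ) : ℝ) : ℂ) by push_cast; ring,
      ← Complex.ofReal_cpow hz2.le, Real.rpow_add hz2, Real.rpow_natCast]
  have e2 : Complex.Gamma ((ν : ℂ) + k + 1) = (Real.Gamma (ν + k + 1) : ℂ) := by
    rw [← Complex.Gamma_ofReal]; push_cast; rfl
  rw [e1, e2, Complex.Gamma_nat_eq_factorial]
  have e3 : (-(z ^ 2 / 4)) ^ k = (-1) ^ k * (z / 2) ^ (2 * k) := by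
    rw [pow_mul, ← mul_pow]; congr 1; ring
  rw [e3]
  push_cast
  ring

/-- The measure `x^a dx` on `(0,∞)`. -/
noncomputable def weightMeasure (a : ℝ) : Measure ℝ :=
  (volume.restrict (Ioi 0)).withDensity fun x => ((x ^ a).toNNReal : ℝ≥0∞)

instance (a : ℝ) : SigmaFinite (weightMeasure a) := by
  unfold weightMeasure; infer_instance

lemma weightMeasure_absolutelyContinuous (a : ℝ) :
    weightMeasure a ≪ volume.restrict (Ioi 0) :=
  withDensity_absolutelyContinuous _ _

lemma ae_weightMeasure_pos (a : ℝ) : ∀ᵐ x ∂weightMeasure a, 0 < x :=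
  weightMeasure_absolutelyContinuous a (ae_restrict_mem measurableSet_Ioi)

lemma measurable_weight (a : ℝ) : Measurable fun x : ℝ => (x ^ a).toNNReal :=
  (measurable_id.pow_const a).real_toNNReal

lemma integral_weightMeasure {E : Type*} [NormedAddCommGroup E] [NormedSpace ℝ E] (a : ℝ)
    (g : ℝ → E) : ∫ x, g x ∂weightMeasure a = ∫ x in Ioi (0 : ℝ), (x ^ a) • g x := by
  unfold weightMeasure
  rw [integral_withDensity_eq_integral_smul (measurable_weight a)]
  refine setIntegral_congr_fun measurableSet_Ioi fun x hx => ?_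
  simp only [NNReal.smul_def, Real.coe_toNNReal _ (Real.rpow_nonneg (le_of_lt hx) a)]

lemma integrable_weightMeasure_iff {E : Type*} [NormedAddCommGroup E] [NormedSpace ℝ E] (a : ℝ)
    (g : ℝ → E) :
    Integrable g (weightMeasure a) ↔ IntegrableOn (fun x => (x ^ a) • g x) (Ioi (0 : ℝ)) := by
  unfold weightMeasure
  rw [integrable_withDensity_iff_integrable_smul (measurable_weight a)]
  refine integrableOn_congr_fun (fun x hx => ?_) measurableSet_Ioi
  simp only [NNReal.smul_def, Real.coe_toNNReal _ (Real.rpow_nonneg (le_of_lt hx) a)]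

lemma lintegral_weightMeasure (a : ℝ) (g : ℝ → ℝ≥0∞) :
    ∫⁻ x, g x ∂weightMeasure a = ∫⁻ x in Ioi (0 : ℝ), ENNReal.ofReal (x ^ a) * g x := by
  unfold weightMeasure
  rw [lintegral_withDensity_eq_lintegral_mul_non_measurable _ (measurable_weight a).coe_nnreal_ennreal
    (by simp)]
  rfl

lemma integrable_gaussian_weight {a : ℝ} (ha : 0 ≤ a) {s : ℝ} (hs : 0 < s) :
    Integrable (fun y => Real.exp (-s * y ^ 2)) (weightMeasure a) := by
  rw [integrable_weightMeasure_iff]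
  exact integrableOn_rpow_mul_exp_neg_mul_sq hs (by linarith)

lemma integral_rpow_mul_gaussian {s p : ℝ} (hs : 0 < s) (hp : -1 < p) :
    ∫ y in Ioi (0 : ℝ), y ^ p * Real.exp (-s * y ^ 2) =
      s ^ (-((p + 1) / 2)) * (1 / 2) * Real.Gamma ((p + 1) / 2) := by
  have := integral_rpow_mul_exp_neg_mul_rpow (p := 2) two_pos hp hs
  simp only [Real.rpow_two] at this
  rw [this, neg_div]

lemma integral_gaussian_weight {a : ℝ} (ha : 0 ≤ a) {s : ℝ} (hs : 0 < s) :
    ∫ y, Real.exp (-s * y ^ 2) ∂weightMeasure a =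
      s ^ (-((a + 1) / 2)) * (1 / 2) * Real.Gamma ((a + 1) / 2) := by
  rw [integral_weightMeasure, ← integral_rpow_mul_gaussian hs (by linarith)]
  rfl

/-- The Hankel transform of a Gaussian is a Gaussian. -/
lemma integral_besselEntire_mul_gaussian {a : ℝ} (ha : 0 ≤ a) {s : ℝ} (hs : 0 < s) (c : ℝ) :
    ∫ y, besselEntire ((a - 1) / 2) (c * y ^ 2) * Real.exp (-s * y ^ 2) ∂weightMeasure a =
      1 / 2 * s ^ (-((a + 1) / 2)) * Real.exp (-(c / s)) := by
  set ν := (a - 1) / 2 with hν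
  have hpos : ∀ k : ℕ, 0 < Real.Gamma (ν + k + 1) := fun k => Real.Gamma_pos_of_pos (by
    have hk : (0 : ℝ) ≤ k := Nat.cast_nonneg k
    linarith)
  have hmom : ∀ k : ℕ, ∫ y in Ioi (0 : ℝ), y ^ (2 * k + a) * Real.exp (-s * y ^ 2) =
      s ^ (-((a + 1) / 2)) * (1 / s) ^ k * (1 / 2) * Real.Gamma (ν + k + 1) := by
    intro k
    have hk : (0 : ℝ) ≤ k := Nat.cast_nonneg k
    rw [integral_rpow_mul_gaussian hs (by linarith),
      show (2 * (k : ℝ) + a + 1) / 2 = ν + k + 1 by rw [hν]; ring,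
      show -(ν + k + 1) = -((a + 1) / 2) + -(k : ℝ) by rw [hν]; ring, Real.rpow_add hs,
      Real.rpow_neg hs.le (k : ℝ), Real.rpow_natCast, one_div_pow, one_div (s ^ k)]
  have hinteg : ∀ k : ℕ, IntegrableOn (fun y => y ^ (2 * k + a) * Real.exp (-s * y ^ 2))
      (Ioi (0 : ℝ)) := by
    intro k
    have hk : (0 : ℝ) ≤ k := Nat.cast_nonneg k
    exact integrableOn_rpow_mul_exp_neg_mul_sq hs (by linarith)
  let T : ℕ → ℝ → ℝ := fun k y => (-c) ^ k / (k.factorial * Real.Gamma (ν + k + 1)) *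
    (y ^ (2 * k + a) * Real.exp (-s * y ^ 2))
  have hTint : ∀ k, ∫ y in Ioi (0 : ℝ), T k y =
      s ^ (-((a + 1) / 2)) * (1 / 2) * ((-(c / s)) ^ k / k.factorial) := by
    intro k
    have := (hpos k).ne'
    simp only [T]
    rw [integral_const_mul, hmom, show -(c / s) = -c * (1 / s) by ring, mul_pow]
    field_simp
  have hTnorm : ∀ k, ∫ y in Ioi (0 : ℝ), ‖T k y‖ =
      s ^ (-((a + 1) / 2)) * (1 / 2) * ((|c| / s) ^ k / k.factorial) := by
    intro k
    have h1 := hpos k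
    have : ∀ y ∈ Ioi (0 : ℝ), ‖T k y‖ = |c| ^ k / (k.factorial * Real.Gamma (ν + k + 1)) *
        (y ^ (2 * k + a) * Real.exp (-s * y ^ 2)) := by
      intro y hy
      have hy' : (0 : ℝ) < y := hy
      have h2 : 0 ≤ y ^ (2 * k + a) * Real.exp (-s * y ^ 2) := by positivity
      simp only [T]
      rw [norm_mul, Real.norm_of_nonneg h2, norm_div, norm_pow, norm_neg, Real.norm_eq_abs,
        Real.norm_of_nonneg (by positivity)]
    rw [setIntegral_congr_fun measurableSet_Ioi this, integral_const_mul, hmom,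
      show |c| / s = |c| * (1 / s) by ring, mul_pow]
    field_simp
  have hsum := hasSum_integral_of_summable_integral_norm
    (μ := volume.restrict (Ioi (0 : ℝ))) (F := T) (fun k => (hinteg k).const_mul _) (by
      simp only [hTnorm]
      exact (Real.summable_pow_div_factorial _).mul_left _)
  simp only [hTint] at hsum
  have hexp : HasSum (fun k : ℕ => s ^ (-((a + 1) / 2)) * (1 / 2) * ((-(c / s)) ^ k / k.factorial))
      (s ^ (-((a + 1) / 2)) * (1 / 2) * Real.exp (-(c / s))) := by
    rw [Real.exp_eq_exp_ℝ]
    exact (NormedSpace.expSeries_div_hasSum_exp (-(c / s))).mul_left _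
  rw [integral_weightMeasure, mul_comm (1 / 2 : ℝ), ← hsum.unique hexp]
  refine setIntegral_congr_fun measurableSet_Ioi fun y hy => ?_
  have hy' : (0 : ℝ) < y := hy
  simp only [T, besselEntire, smul_eq_mul]
  rw [mul_comm, ← tsum_mul_right, ← tsum_mul_right]
  refine tsum_congr fun k => ?_
  rw [Real.rpow_add hy', show (2 : ℝ) * k = ((2 * k : ℕ) : ℝ) by push_cast; rfl, Real.rpow_natCast,
    pow_mul, show -(c * y ^ 2) = -c * y ^ 2 by ring, mul_pow]
  ring

lemma integrable_gaussianSum_sq {a : ℝ} (ha : 0 ≤ a) (n : ℕ) (α s : ℕ → ℝ) (hs : ∀ i, 0 < s i) :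
    Integrable (fun y => (∑ i ∈ Finset.range n, α i * Real.exp (-s i * y ^ 2)) ^ 2)
      (weightMeasure a) ∧
    ∫ y, (∑ i ∈ Finset.range n, α i * Real.exp (-s i * y ^ 2)) ^ 2 ∂weightMeasure a =
      ∑ i ∈ Finset.range n, ∑ j ∈ Finset.range n, α i * α j *
        ((s i + s j) ^ (-((a + 1) / 2)) * (1 / 2) * Real.Gamma ((a + 1) / 2)) := by
  have e : ∀ y : ℝ, (∑ i ∈ Finset.range n, α i * Real.exp (-s i * y ^ 2)) ^ 2 =
      ∑ i ∈ Finset.range n, ∑ j ∈ Finset.range n,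
        α i * α j * Real.exp (-(s i + s j) * y ^ 2) := by
    intro y
    rw [sq, Finset.sum_mul_sum]
    refine Finset.sum_congr rfl fun i _ => Finset.sum_congr rfl fun j _ => ?_
    rw [show -(s i + s j) * y ^ 2 = -s i * y ^ 2 + -s j * y ^ 2 by ring, Real.exp_add]
    ring
  have hI : ∀ i j, Integrable (fun y => α i * α j * Real.exp (-(s i + s j) * y ^ 2))
      (weightMeasure a) := fun i j =>
    (integrable_gaussian_weight ha (add_pos (hs i) (hs j))).const_mul _
  simp only [e]
  refine ⟨integrable_finsetSum _ fun i _ => integrable_finsetSum _ fun j _ => hI i j, ?_⟩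
  rw [integral_finsetSum _ fun i _ => integrable_finsetSum _ fun j _ => hI i j]
  refine Finset.sum_congr rfl fun i _ => ?_
  rw [integral_finsetSum _ fun j _ => hI i j]
  refine Finset.sum_congr rfl fun j _ => ?_
  rw [integral_const_mul, integral_gaussian_weight ha (add_pos (hs i) (hs j))]

/-- The Hankel-type transform with kernel `besselEntire ((a-1)/2) (b x² y²)`. -/
noncomputable def hankel (a b : ℝ) (f : ℝ → ℝ) (x : ℝ) : ℝ :=
  ∫ y, besselEntire ((a - 1) / 2) (b * x ^ 2 * y ^ 2) * f y ∂weightMeasure a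

lemma continuous_hankel_kernel {a : ℝ} (ha : 0 ≤ a) (b : ℝ) :
    Continuous fun p : ℝ × ℝ => besselEntire ((a - 1) / 2) (b * p.1 ^ 2 * p.2 ^ 2) :=
  (continuous_besselEntire (by linarith)).comp (by fun_prop)

lemma integrable_hankel_integrand {a b : ℝ} (ha : 0 ≤ a) (hb : 0 ≤ b) {f : ℝ → ℝ}
    (hf : Integrable f (weightMeasure a)) (x : ℝ) :
    Integrable (fun y => besselEntire ((a - 1) / 2) (b * x ^ 2 * y ^ 2) * f y)
      (weightMeasure a) := by
  refine hf.bdd_mul (c := besselEntire ((a - 1) / 2) 0) ?_ ?_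
  · exact ((continuous_hankel_kernel ha b).comp (Continuous.prodMk_right x)).aestronglyMeasurable
  · exact .of_forall fun y => abs_besselEntire_le (by linarith) (by positivity)

lemma hankel_gaussianSum {a b : ℝ} (ha : 0 ≤ a) (hb : 0 < b) (n : ℕ) (α s : ℕ → ℝ)
    (hs : ∀ i, 0 < s i) (x : ℝ) :
    hankel a b (fun y => ∑ i ∈ Finset.range n, α i * Real.exp (-s i * y ^ 2)) x =
      ∑ i ∈ Finset.range n, (α i * (1 / 2 * s i ^ (-((a + 1) / 2)))) *
        Real.exp (-(b / s i) * x ^ 2) := by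
  unfold hankel
  simp only [Finset.mul_sum]
  rw [integral_finsetSum]
  · refine Finset.sum_congr rfl fun i _ => ?_
    rw [show (fun y => besselEntire ((a - 1) / 2) (b * x ^ 2 * y ^ 2) *
        (α i * Real.exp (-s i * y ^ 2))) = fun y => α i *
        (besselEntire ((a - 1) / 2) (b * x ^ 2 * y ^ 2) * Real.exp (-s i * y ^ 2)) by
      ext y; ring, integral_const_mul, integral_besselEntire_mul_gaussian ha (hs i),
      show -(b / s i) * x ^ 2 = -(b * x ^ 2 / s i) by ring]
    ring
  · intro i _
    exact integrable_hankel_integrand ha hb.le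
      ((integrable_gaussian_weight ha (hs i)).const_mul _) x

lemma lintegral_hankel_gaussianSum {a b : ℝ} (ha : 0 ≤ a) (hb : 0 < b) (n : ℕ) (α s : ℕ → ℝ)
    (hs : ∀ i, 0 < s i) :
    ∫⁻ x, ENNReal.ofReal
      (hankel a b (fun y => ∑ i ∈ Finset.range n, α i * Real.exp (-s i * y ^ 2)) x ^ 2)
        ∂weightMeasure a =
    ENNReal.ofReal (1 / 4 * b ^ (-((a + 1) / 2))) *
      ∫⁻ x, ENNReal.ofReal ((∑ i ∈ Finset.range n, α i * Real.exp (-s i * x ^ 2)) ^ 2)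
        ∂weightMeasure a := by
  have hs' : ∀ i, 0 < b / s i := fun i => div_pos hb (hs i)
  obtain ⟨h1, h2⟩ := integrable_gaussianSum_sq ha n α s hs
  obtain ⟨h3, h4⟩ := integrable_gaussianSum_sq ha n
    (fun i => α i * (1 / 2 * s i ^ (-((a + 1) / 2)))) (fun i => b / s i) hs'
  simp only [hankel_gaussianSum ha hb n α s hs]
  rw [← ofReal_integral_eq_lintegral_ofReal h1 (.of_forall fun _ => sq_nonneg _),
    ← ofReal_integral_eq_lintegral_ofReal h3 (.of_forall fun _ => sq_nonneg _), h2, h4,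
    ← ENNReal.ofReal_mul (by positivity), Finset.mul_sum]
  congr 1
  refine Finset.sum_congr rfl fun i _ => ?_
  rw [Finset.mul_sum]
  refine Finset.sum_congr rfl fun j _ => ?_
  have hi := hs i
  have hj := hs j
  have hij : s i ^ (-((a + 1) / 2)) * s j ^ (-((a + 1) / 2)) *
      (b / s i + b / s j) ^ (-((a + 1) / 2)) =
      b ^ (-((a + 1) / 2)) * (s i + s j) ^ (-((a + 1) / 2)) := by
    rw [← Real.mul_rpow hi.le hj.le, ← Real.mul_rpow (by positivity) (by positivity),
      ← Real.mul_rpow hb.le (by positivity)]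
    congr 1
    field_simp
    ring
  linear_combination (α i * α j * (1 / 4) * (1 / 2) * Real.Gamma ((a + 1) / 2)) * hij

/-- The finite measure `e^{-x²} x^a dx` on `(0,∞)`. -/
noncomputable def gaussianWeight (a : ℝ) : Measure ℝ :=
  (weightMeasure a).withDensity fun x => ENNReal.ofReal (Real.exp (-x ^ 2))

lemma lintegral_gaussianWeight (a : ℝ) (g : ℝ → ℝ≥0∞) :
    ∫⁻ x, g x ∂gaussianWeight a =
      ∫⁻ x, ENNReal.ofReal (Real.exp (-x ^ 2)) * g x ∂weightMeasure a := by
  unfold gaussianWeight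
  rw [lintegral_withDensity_eq_lintegral_mul_non_measurable _ (by fun_prop) (by simp)]
  rfl

lemma gaussianWeight_le (a : ℝ) : gaussianWeight a ≤ weightMeasure a := by
  refine Measure.le_iff.2 fun s hs => ?_
  unfold gaussianWeight
  rw [withDensity_apply _ hs, ← setLIntegral_one]
  refine lintegral_mono fun x => ?_
  rw [ENNReal.ofReal_le_one, Real.exp_le_one_iff]
  nlinarith [sq_nonneg x]

lemma isFiniteMeasure_gaussianWeight {a : ℝ} (ha : 0 ≤ a) :
    IsFiniteMeasure (gaussianWeight a) := by
  refine ⟨?_⟩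
  have h := integrable_gaussian_weight ha one_pos
  have := h.lintegral_lt_top
  rw [← setLIntegral_one, setLIntegral_univ, lintegral_gaussianWeight]
  simpa [neg_mul] using this

lemma continuous_comp_sqrt_neg_log {ψ : ℝ → ℝ} (hψ : Continuous ψ) (hc : HasCompactSupport ψ) :
    Continuous fun u : ℝ => if u ≤ 0 then 0 else ψ (Real.sqrt (-Real.log u)) := by
  obtain ⟨R, hR⟩ := hc.isCompact.isBounded.subset_closedBall 0
  have hzero : ∀ x, R < x → ψ x = 0 := by
    intro x hx
    by_contra h
    have := hR (subset_tsupport _ h)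
    simp only [Metric.mem_closedBall, dist_zero_right, Real.norm_eq_abs] at this
    linarith [le_abs_self x]
  refine continuous_iff_continuousAt.2 fun u => ?_
  rcases le_or_gt u 0 with hu | hu
  · have : (fun u : ℝ => if u ≤ 0 then 0 else ψ (Real.sqrt (-Real.log u))) =ᶠ[𝓝 u]
        fun _ => 0 := by
      filter_upwards [Iio_mem_nhds (hu.trans_lt (Real.exp_pos (-(|R| + 1) ^ 2)))] with v hv
      split_ifs with h
      · rfl
      · refine hzero _ ?_
        push Not at h
        have h1 : Real.log v < -(|R| + 1) ^ 2 := (Real.log_lt_iff_lt_exp h).2 hv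
        have h2 : |R| + 1 ≤ Real.sqrt (-Real.log v) := Real.le_sqrt_of_sq_le (by linarith)
        linarith [le_abs_self R]
    exact continuousAt_const.congr this.symm
  · have : (fun u : ℝ => if u ≤ 0 then 0 else ψ (Real.sqrt (-Real.log u))) =ᶠ[𝓝 u]
        fun u => ψ (Real.sqrt (-Real.log u)) := by
      filter_upwards [Ioi_mem_nhds hu] with v hv
      rw [if_neg (not_le.2 hv)]
    exact (hψ.continuousAt.comp (Real.continuous_sqrt.continuousAt.comp
      (Real.continuousAt_log hu.ne').neg)).congr this.symm

/-- Polynomials in `e^{-x²}` are dense in `L²(e^{-x²} x^a dx)`. -/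
lemma exists_polynomial_gaussian_approx {a : ℝ} (ha : 0 ≤ a) {k : ℝ → ℝ}
    (hk : MemLp k 2 (gaussianWeight a)) {ε : ℝ} (hε : 0 < ε) :
    ∃ p : Polynomial ℝ, eLpNorm (fun x => k x - p.eval (Real.exp (-x ^ 2))) 2 (gaussianWeight a) ≤
      (1 + gaussianWeight a univ ^ ((2 : ℝ≥0∞).toReal)⁻¹) * ENNReal.ofReal ε := by
  have := isFiniteMeasure_gaussianWeight ha
  obtain ⟨ψ, hc, hle, hψ, hψm⟩ := hk.exists_hasCompactSupport_eLpNorm_sub_le (by simp)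
    (ε := ENNReal.ofReal ε) (by simpa using hε)
  obtain ⟨p, hp⟩ := exists_polynomial_near_of_continuousOn 0 1 _
    (continuous_comp_sqrt_neg_log hψ hc).continuousOn ε hε
  have hpos : ∀ᵐ x ∂gaussianWeight a, 0 < x :=
    withDensity_absolutelyContinuous _ _ (ae_weightMeasure_pos a)
  have hpm : AEStronglyMeasurable (fun x => p.eval (Real.exp (-x ^ 2))) (gaussianWeight a) :=
    (p.continuous.comp (by fun_prop)).aestronglyMeasurable
  refine ⟨p, ?_⟩
  have h2 : eLpNorm (fun x => ψ x - p.eval (Real.exp (-x ^ 2))) 2 (gaussianWeight a) ≤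
      gaussianWeight a univ ^ ((2 : ℝ≥0∞).toReal)⁻¹ * ENNReal.ofReal ε := by
    refine eLpNorm_le_of_ae_bound ?_
    filter_upwards [hpos] with x hx
    have h3 := hp (Real.exp (-x ^ 2)) ⟨(Real.exp_pos _).le, by
      rw [Real.exp_le_one_iff]; nlinarith [sq_nonneg x]⟩
    rw [if_neg (not_le.2 (Real.exp_pos _)), Real.log_exp, neg_neg, Real.sqrt_sq hx.le] at h3
    rw [← norm_neg, neg_sub]
    exact h3.le
  calc eLpNorm (fun x => k x - p.eval (Real.exp (-x ^ 2))) 2 (gaussianWeight a)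
      = eLpNorm ((k - ψ) + fun x => ψ x - p.eval (Real.exp (-x ^ 2))) 2 (gaussianWeight a) := by
        congr 1; ext x; simp
    _ ≤ _ := (eLpNorm_add_le (hk.1.sub hψm.1) (hψm.1.sub hpm) (by simp)).trans
        (add_le_add hle h2)
    _ = _ := by ring

lemma eLpNorm_two_sq {α : Type*} [MeasurableSpace α] (μ : Measure α) (g : α → ℝ) :
    eLpNorm g 2 μ ^ 2 = ∫⁻ x, ENNReal.ofReal (g x ^ 2) ∂μ := by
  rw [eLpNorm_eq_lintegral_rpow_enorm_toReal (by simp) (by simp), ← ENNReal.rpow_natCast,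
    ← ENNReal.rpow_mul]
  simp only [ENNReal.toReal_ofNat, Nat.cast_ofNat, one_div, ne_eq, OfNat.ofNat_ne_zero,
    not_false_eq_true, inv_mul_cancel₀, ENNReal.rpow_one]
  refine lintegral_congr fun x => ?_
  rw [← sq_abs, ENNReal.ofReal_pow (abs_nonneg _), Real.enorm_eq_ofReal_abs, ENNReal.rpow_ofNat]

/-- The operator norm of the transform `hankel a b` on `L²(x^a dx)`. -/
noncomputable def hankelConst (a b : ℝ) : ℝ≥0∞ :=
  ENNReal.ofReal (1 / 4 * b ^ (-((a + 1) / 2))) ^ (1 / 2 : ℝ)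

lemma eLpNorm_hankel_polynomial {a b : ℝ} (ha : 0 ≤ a) (hb : 0 < b) (p : Polynomial ℝ) :
    eLpNorm (hankel a b fun y => Real.exp (-y ^ 2) * p.eval (Real.exp (-y ^ 2))) 2
      (weightMeasure a) = hankelConst a b *
    eLpNorm (fun y => Real.exp (-y ^ 2) * p.eval (Real.exp (-y ^ 2))) 2 (weightMeasure a) := by
  have e : (fun y : ℝ => Real.exp (-y ^ 2) * p.eval (Real.exp (-y ^ 2))) = fun y =>
      ∑ i ∈ Finset.range (p.natDegree + 1), p.coeff i * Real.exp (-((i : ℝ) + 1) * y ^ 2) := by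
    ext y
    rw [Polynomial.eval_eq_sum_range, Finset.mul_sum]
    refine Finset.sum_congr rfl fun i _ => ?_
    rw [← Real.exp_nat_mul, mul_left_comm, ← Real.exp_add]
    congr 2
    ring
  have h := lintegral_hankel_gaussianSum ha hb (p.natDegree + 1) p.coeff
    (fun i => (i : ℝ) + 1) (fun i => by positivity)
  rw [← e, ← eLpNorm_two_sq, ← eLpNorm_two_sq (weightMeasure a)
    (fun y => ∑ i ∈ Finset.range (p.natDegree + 1), p.coeff i * Real.exp (-((i : ℝ) + 1) * y ^ 2)),
    ← e] at h
  have h' := congrArg (fun z : ℝ≥0∞ => z ^ (1 / 2 : ℝ)) h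
  simp only [← ENNReal.rpow_natCast] at h'
  rw [ENNReal.mul_rpow_of_nonneg _ _ (by norm_num), ← ENNReal.rpow_mul, ← ENNReal.rpow_mul] at h'
  simpa [hankelConst] using h'

lemma continuous_hankel {a b : ℝ} (ha : 0 ≤ a) (hb : 0 ≤ b) {f : ℝ → ℝ}
    (hf : Integrable f (weightMeasure a)) : Continuous (hankel a b f) := by
  refine continuous_of_dominated (bound := fun y => besselEntire ((a - 1) / 2) 0 * ‖f y‖)
    (fun x => (integrable_hankel_integrand ha hb hf x).1) (fun x => .of_forall fun y => ?_)
    (hf.norm.const_mul _) (.of_forall fun y => ?_)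
  · rw [norm_mul]
    exact mul_le_mul_of_nonneg_right (abs_besselEntire_le (by linarith) (by positivity))
      (norm_nonneg _)
  · exact ((continuous_hankel_kernel ha b).comp (Continuous.prodMk_left y)).mul continuous_const

lemma enorm_hankel_sub_le {a b : ℝ} (ha : 0 ≤ a) (hb : 0 ≤ b) {f g : ℝ → ℝ}
    (hf : Integrable f (weightMeasure a)) (hg : Integrable g (weightMeasure a)) (x : ℝ) :
    ‖hankel a b f x - hankel a b g x‖ₑ ≤ ENNReal.ofReal (besselEntire ((a - 1) / 2) 0) *
      eLpNorm (fun y => f y - g y) 1 (weightMeasure a) := by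
  unfold hankel
  rw [← integral_sub (integrable_hankel_integrand ha hb hf x)
    (integrable_hankel_integrand ha hb hg x), eLpNorm_one_eq_lintegral_enorm,
    ← lintegral_const_mul' _ _ ENNReal.ofReal_ne_top]
  refine (enorm_integral_le_lintegral_enorm _).trans (lintegral_mono fun y => ?_)
  simp only [← mul_sub]
  rw [enorm_mul, Real.enorm_eq_ofReal_abs (besselEntire _ _)]
  gcongr
  exact abs_besselEntire_le (by linarith) (by positivity)

lemma eLpNorm_le_of_tendsto_of_le {μ : Measure ℝ} {f : ℝ → ℝ} {g G : ℕ → ℝ → ℝ} {F : ℝ → ℝ}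
    {c : ℝ≥0∞} (hc : c ≠ ∞) (hG : ∀ n, AEStronglyMeasurable (G n) μ)
    (hlim : ∀ x, Tendsto (fun n => G n x) atTop (𝓝 (F x)))
    (hle : ∀ n, eLpNorm (G n) 2 μ ≤ c * eLpNorm (g n) 2 μ)
    {δ : ℕ → ℝ≥0∞} (hδ : Tendsto δ atTop (𝓝 0))
    (hg : ∀ n, eLpNorm (g n) 2 μ ≤ eLpNorm f 2 μ + δ n) :
    eLpNorm F 2 μ ≤ c * eLpNorm f 2 μ := by
  have h1 := Lp.eLpNorm_lim_le_liminf_eLpNorm (p := 2) hG F (.of_forall hlim)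
  have h2 : Tendsto (fun n => c * (eLpNorm f 2 μ + δ n)) atTop (𝓝 (c * (eLpNorm f 2 μ + 0))) :=
    ENNReal.Tendsto.const_mul (tendsto_const_nhds.add hδ) (.inr hc)
  rw [add_zero] at h2
  refine h1.trans ?_
  rw [← h2.liminf_eq]
  exact liminf_le_liminf (.of_forall fun n => (hle n).trans (by gcongr; exact hg n))

lemma hankelConst_ne_top (a b : ℝ) : hankelConst a b ≠ ∞ :=
  ENNReal.rpow_ne_top_of_nonneg (by norm_num) ENNReal.ofReal_ne_top

lemma eLpNorm_hankel_le_of_gaussian_decay {a b : ℝ} (ha : 0 ≤ a) (hb : 0 < b) {f : ℝ → ℝ}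
    (hf : Integrable f (weightMeasure a))
    (hk : MemLp (fun x => Real.exp (x ^ 2) * f x) 2 (gaussianWeight a)) :
    eLpNorm (hankel a b f) 2 (weightMeasure a) ≤
      hankelConst a b * eLpNorm f 2 (weightMeasure a) := by
  have hfin := isFiniteMeasure_gaussianWeight ha
  set M : ℝ≥0∞ := gaussianWeight a univ ^ ((2 : ℝ≥0∞).toReal)⁻¹ with hM
  have hMtop : M ≠ ∞ := ENNReal.rpow_ne_top_of_nonneg (by simp) (measure_ne_top _ _)
  choose p hp using fun n : ℕ =>
    exists_polynomial_gaussian_approx ha hk (Nat.one_div_pos_of_nat (α := ℝ) (n := n))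
  set δ : ℕ → ℝ≥0∞ := fun n => (1 + M) * ENNReal.ofReal (1 / (n + 1)) with hδdef
  have hδ : Tendsto δ atTop (𝓝 0) := by
    have : Tendsto (fun n : ℕ => ENNReal.ofReal (1 / ((n : ℝ) + 1))) atTop (𝓝 0) := by
      rw [← ENNReal.ofReal_zero]
      exact (ENNReal.continuous_ofReal.tendsto _).comp tendsto_one_div_add_atTop_nhds_zero_nat
    simpa [hδdef] using ENNReal.Tendsto.const_mul this (.inr (by simp [hMtop]) : _ ∨ (1 + M) ≠ ∞)
  set g : ℕ → ℝ → ℝ := fun n y => Real.exp (-y ^ 2) * (p n).eval (Real.exp (-y ^ 2)) with hg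
  have hgc : ∀ n, Continuous (g n) := fun n =>
    (by fun_prop : Continuous fun y : ℝ => Real.exp (-y ^ 2)).mul
      ((p n).continuous.comp (by fun_prop))
  have hdiff : ∀ n x, f x - g n x = Real.exp (-x ^ 2) *
      (Real.exp (x ^ 2) * f x - (p n).eval (Real.exp (-x ^ 2))) := by
    intro n x
    rw [mul_sub, ← mul_assoc, ← Real.exp_add, neg_add_cancel, Real.exp_zero, one_mul]
  have hpm : ∀ n, AEStronglyMeasurable (fun x => Real.exp (x ^ 2) * f x -
      (p n).eval (Real.exp (-x ^ 2))) (gaussianWeight a) := fun n =>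
    hk.1.sub ((p n).continuous.comp (by fun_prop)).aestronglyMeasurable
  have h1 : ∀ n, eLpNorm (fun y => f y - g n y) 1 (weightMeasure a) ≤ δ n * M := by
    intro n
    calc eLpNorm (fun y => f y - g n y) 1 (weightMeasure a)
        = eLpNorm (fun x => Real.exp (x ^ 2) * f x - (p n).eval (Real.exp (-x ^ 2))) 1
            (gaussianWeight a) := by
          rw [eLpNorm_one_eq_lintegral_enorm, eLpNorm_one_eq_lintegral_enorm,
            lintegral_gaussianWeight]
          refine lintegral_congr fun x => ?_
          rw [hdiff, enorm_mul, Real.enorm_of_nonneg (Real.exp_pos _).le]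
      _ ≤ _ := eLpNorm_le_eLpNorm_mul_rpow_measure_univ (q := 2) (by norm_num) (hpm n)
      _ ≤ δ n * M := by
          rw [hM]
          refine mul_le_mul' (hp n) (le_of_eq ?_)
          congr 1
          norm_num
  have h2 : ∀ n, eLpNorm (fun y => f y - g n y) 2 (weightMeasure a) ≤ δ n := by
    intro n
    refine le_trans ?_ (hp n)
    rw [← ENNReal.pow_le_pow_left_iff two_ne_zero, eLpNorm_two_sq,
      eLpNorm_two_sq, lintegral_gaussianWeight]
    refine lintegral_mono fun x => ?_
    rw [← ENNReal.ofReal_mul (Real.exp_pos _).le, hdiff, mul_pow, sq (Real.exp _), mul_assoc]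
    gcongr
    refine mul_le_of_le_one_left (by positivity) ?_
    rw [Real.exp_le_one_iff]
    nlinarith [sq_nonneg x]
  have hgi : ∀ n, Integrable (g n) (weightMeasure a) := by
    intro n
    have : Integrable (fun y => f y - g n y) (weightMeasure a) :=
      memLp_one_iff_integrable.1 ⟨hf.1.sub (hgc n).aestronglyMeasurable, (h1 n).trans_lt
        (ENNReal.mul_lt_top (ENNReal.mul_lt_top (by simp [hMtop.lt_top]) (by simp))
          hMtop.lt_top)⟩
    exact (hf.sub this).congr (.of_forall fun x => by simp)
  refine eLpNorm_le_of_tendsto_of_le (g := g) (G := fun n => hankel a b (g n))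
    (hankelConst_ne_top a b)
    (fun n => (continuous_hankel ha hb.le (hgi n)).aestronglyMeasurable) (fun x => ?_)
    (fun n => (eLpNorm_hankel_polynomial ha hb (p n)).le) hδ (fun n => ?_)
  · rw [tendsto_iff_edist_tendsto_0]
    have hz : Tendsto (fun n => ENNReal.ofReal (besselEntire ((a - 1) / 2) 0) * (δ n * M)) atTop
        (𝓝 0) := by
      have := ENNReal.Tendsto.const_mul (ENNReal.Tendsto.mul_const hδ (.inr hMtop))
        (.inr (ENNReal.ofReal_ne_top (r := besselEntire ((a - 1) / 2) 0)))
      simpa using this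
    refine tendsto_of_tendsto_of_tendsto_of_le_of_le tendsto_const_nhds hz (fun _ => zero_le)
      fun n => ?_
    simp only
    rw [edist_comm, edist_eq_enorm_sub]
    exact (enorm_hankel_sub_le ha hb.le hf (hgi n) x).trans (by gcongr; exact h1 n)
  · calc eLpNorm (g n) 2 (weightMeasure a)
        = eLpNorm (f - fun y => f y - g n y) 2 (weightMeasure a) := by
          congr 1; ext x; simp
      _ ≤ _ := (eLpNorm_sub_le hf.1 (hf.1.sub (hgc n).aestronglyMeasurable) (by simp)).trans
        (by gcongr; exact h2 n)

/-- The Plancherel-type bound for the transform `hankel a b`. -/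
lemma eLpNorm_hankel_le {a b : ℝ} (ha : 0 ≤ a) (hb : 0 < b) {f : ℝ → ℝ}
    (hf : Integrable f (weightMeasure a)) (hf2 : MemLp f 2 (weightMeasure a)) :
    eLpNorm (hankel a b f) 2 (weightMeasure a) ≤
      hankelConst a b * eLpNorm f 2 (weightMeasure a) := by
  have hfn : ∀ n : ℕ, Integrable ((Icc (-n : ℝ) n).indicator f) (weightMeasure a) :=
    fun n => hf.indicator measurableSet_Icc
  refine eLpNorm_le_of_tendsto_of_le (g := fun n : ℕ => (Icc (-n : ℝ) n).indicator f)
    (G := fun n : ℕ => hankel a b ((Icc (-n : ℝ) n).indicator f)) (δ := fun _ => 0)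
    (hankelConst_ne_top a b)
    (fun n => (continuous_hankel ha hb.le (hfn n)).aestronglyMeasurable) (fun x => ?_)
    (fun n => eLpNorm_hankel_le_of_gaussian_decay ha hb (hfn n) ?_) tendsto_const_nhds
    (fun n => by simpa using eLpNorm_indicator_le f)
  · refine tendsto_integral_of_dominated_convergence
      (bound := fun y => besselEntire ((a - 1) / 2) 0 * ‖f y‖)
      (fun n => (integrable_hankel_integrand ha hb.le (hfn n) x).1) (hf.norm.const_mul _)
      (fun n => .of_forall fun y => ?_) (.of_forall fun y => ?_)
    · rw [norm_mul]
      exact mul_le_mul (abs_besselEntire_le (by linarith) (by positivity))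
        (norm_indicator_le_norm_self _ _) (norm_nonneg _)
        ((abs_nonneg _).trans (abs_besselEntire_le (w := 0) (by linarith) le_rfl))
    · refine Tendsto.mul tendsto_const_nhds (tendsto_const_nhds.congr' ?_)
      obtain ⟨N, hN⟩ := exists_nat_ge |y|
      filter_upwards [eventually_ge_atTop N] with n hn
      have : (N : ℝ) ≤ n := by exact_mod_cast hn
      have hy : y ∈ Icc (-n : ℝ) n := abs_le.1 (hN.trans this)
      exact (indicator_of_mem hy f).symm
  · refine MemLp.of_le_mul (c := Real.exp ((n : ℝ) ^ 2)) (hf2.mono_measure (gaussianWeight_le a))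
      ?_ (.of_forall fun x => ?_)
    · exact (by fun_prop : Continuous fun x : ℝ => Real.exp (x ^ 2)).aestronglyMeasurable.mul
        ((hf2.1.mono_measure (gaussianWeight_le a)).indicator measurableSet_Icc)
    · rw [norm_mul, Real.norm_of_nonneg (Real.exp_pos _).le]
      by_cases hx : x ∈ Icc (-n : ℝ) n
      · rw [indicator_of_mem hx]
        exact mul_le_mul_of_nonneg_right (Real.exp_le_exp.2 (sq_le_sq' hx.1 hx.2)) (norm_nonneg _)
      · rw [indicator_of_notMem hx]
        simp only [norm_zero, mul_zero]
        positivity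

lemma lintegral_rpow_of_lt_ofReal {d s : ℝ} (hd : 0 ≤ d) (hs : 0 < s) :
    ∫⁻ l in Ioi (0 : ℝ), (if ENNReal.ofReal l < ENNReal.ofReal d then
      ENNReal.ofReal (l ^ (s - 1)) else 0) = ENNReal.ofReal d ^ s / ENNReal.ofReal s := by
  have e : ∀ l ∈ Ioi (0 : ℝ), (if ENNReal.ofReal l < ENNReal.ofReal d then
      ENNReal.ofReal (l ^ (s - 1)) else 0) =
      (Iio d).indicator (fun l => ENNReal.ofReal (l ^ (s - 1))) l := by
    intro l hl
    simp only [indicator, mem_Iio, ENNReal.ofReal_lt_ofReal_iff_of_nonneg (le_of_lt hl)]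
  rw [setLIntegral_congr_fun measurableSet_Ioi e, lintegral_indicator measurableSet_Iio,
    Measure.restrict_restrict measurableSet_Iio, inter_comm, Ioi_inter_Iio,
    restrict_Ioo_eq_restrict_Ioc]
  have hi : IntegrableOn (fun l : ℝ => l ^ (s - 1)) (Ioc 0 d) :=
    (intervalIntegrable_iff_integrableOn_Ioc_of_le hd).1
      (intervalIntegral.intervalIntegrable_rpow' (by linarith))
  rw [← ofReal_integral_eq_lintegral_ofReal hi
    ((ae_restrict_mem measurableSet_Ioc).mono fun l hl => Real.rpow_nonneg hl.1.le _),
    ← intervalIntegral.integral_of_le hd, integral_rpow (.inl (by linarith)), sub_add_cancel,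
    Real.zero_rpow hs.ne', sub_zero, ENNReal.ofReal_div_of_pos hs,
    ENNReal.ofReal_rpow_of_nonneg hd hs.le]

/-- `∫_0^c l^(s-1) dl = c^s / s` for extended nonnegative `c`. -/
lemma lintegral_rpow_of_lt (c : ℝ≥0∞) {s : ℝ} (hs : 0 < s) :
    ∫⁻ l in Ioi (0 : ℝ), (if ENNReal.ofReal l < c then ENNReal.ofReal (l ^ (s - 1)) else 0) =
      c ^ s / ENNReal.ofReal s := by
  by_cases hc : c = ∞
  · subst hc
    rw [ENNReal.top_rpow_of_pos hs, ENNReal.top_div_of_ne_top ENNReal.ofReal_ne_top]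
    have ht : Tendsto (fun n : ℕ => (n : ℝ≥0∞) ^ s / ENNReal.ofReal s) atTop
        (𝓝 (∞ ^ s / ENNReal.ofReal s)) :=
      ENNReal.Tendsto.div_const
        ((ENNReal.continuous_rpow_const.tendsto _).comp ENNReal.tendsto_nat_nhds_top)
        (.inr (by simpa using hs))
    rw [ENNReal.top_rpow_of_pos hs, ENNReal.top_div_of_ne_top ENNReal.ofReal_ne_top] at ht
    refine top_le_iff.1 (le_of_tendsto' ht fun n => ?_)
    rw [← ENNReal.ofReal_natCast, ← lintegral_rpow_of_lt_ofReal n.cast_nonneg hs]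
    refine lintegral_mono fun l => ?_
    rw [if_pos ENNReal.ofReal_lt_top]
    split_ifs <;> simp
  · rw [← ENNReal.ofReal_toReal hc]
    exact lintegral_rpow_of_lt_ofReal ENNReal.toReal_nonneg hs

/-- The layer-cake formula for extended nonnegative functions. -/
lemma lintegral_rpow_layercake {X : Type*} [MeasurableSpace X] (μ : Measure X) [SFinite μ]
    {G : X → ℝ≥0∞} (hG : Measurable G) {s : ℝ} (hs : 0 < s) :
    ∫⁻ x, G x ^ s ∂μ = ENNReal.ofReal s *
      ∫⁻ l in Ioi (0 : ℝ), ENNReal.ofReal (l ^ (s - 1)) * μ {x | ENNReal.ofReal l < G x} := by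
  have hs' : ENNReal.ofReal s ≠ 0 := by simpa using hs
  have hset : MeasurableSet {z : X × ℝ | ENNReal.ofReal z.2 < G z.1} :=
    measurableSet_lt (ENNReal.measurable_ofReal.comp measurable_snd) (hG.comp measurable_fst)
  have hm : Measurable fun z : X × ℝ =>
      (if ENNReal.ofReal z.2 < G z.1 then ENNReal.ofReal (z.2 ^ (s - 1)) else 0) :=
    Measurable.ite hset (by fun_prop) measurable_const
  calc ∫⁻ x, G x ^ s ∂μ
      = ∫⁻ x, (ENNReal.ofReal s * ∫⁻ l in Ioi (0 : ℝ),
          (if ENNReal.ofReal l < G x then ENNReal.ofReal (l ^ (s - 1)) else 0)) ∂μ := by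
        refine lintegral_congr fun x => ?_
        rw [lintegral_rpow_of_lt _ hs, ENNReal.mul_div_cancel hs' ENNReal.ofReal_ne_top]
    _ = ENNReal.ofReal s * ∫⁻ x, (∫⁻ l in Ioi (0 : ℝ),
          (if ENNReal.ofReal l < G x then ENNReal.ofReal (l ^ (s - 1)) else 0)) ∂μ :=
        lintegral_const_mul' _ _ ENNReal.ofReal_ne_top
    _ = ENNReal.ofReal s * ∫⁻ l in Ioi (0 : ℝ), ∫⁻ x,
          (if ENNReal.ofReal l < G x then ENNReal.ofReal (l ^ (s - 1)) else 0) ∂μ := by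
        rw [lintegral_lintegral_swap hm.aemeasurable]
    _ = _ := by
        congr 1
        refine lintegral_congr fun l => ?_
        have : MeasurableSet {x | ENNReal.ofReal l < G x} := measurableSet_lt measurable_const hG
        rw [← lintegral_indicator_const this]
        refine lintegral_congr fun x => ?_
        simp [indicator]

/-- Minkowski's integral inequality. -/
lemma lintegral_rpow_lintegral_le {X Y : Type*} [MeasurableSpace X] [MeasurableSpace Y]
    (μ : Measure X) [SigmaFinite μ] (ν : Measure Y) [SFinite ν] {g : X → Y → ℝ≥0∞}
    (hg : Measurable (Function.uncurry g)) {r : ℝ} (hr : 1 < r) :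
    (∫⁻ x, (∫⁻ y, g x y ∂ν) ^ r ∂μ) ^ (1 / r) ≤ ∫⁻ y, (∫⁻ x, g x y ^ r ∂μ) ^ (1 / r) ∂ν := by
  have hr0 : 0 < r := by linarith
  set K := ∫⁻ y, (∫⁻ x, g x y ^ r ∂μ) ^ (1 / r) ∂ν with hK
  set G : X → ℝ≥0∞ := fun x => ∫⁻ y, g x y ∂ν with hGdef
  have hG : Measurable G := hg.lintegral_prod_right'
  have hconj : r.HolderConjugate (r / (r - 1)) := Real.HolderConjugate.conjExponent hr
  -- Testing against finite truncations of the inner integral.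
  have key : ∀ H : X → ℝ≥0∞, Measurable H → (∀ x, H x ≤ G x) → ∫⁻ x, H x ^ r ∂μ ≠ ∞ →
      ∫⁻ x, H x ^ r ∂μ ≤ K ^ r := by
    intro H hH hHG hfin
    set I := ∫⁻ x, H x ^ r ∂μ with hI
    by_cases hI0 : I = 0
    · rw [hI0]; exact zero_le
    have h1 : I ≤ K * I ^ (1 / (r / (r - 1))) := by
      calc I = ∫⁻ x, H x ^ (r - 1) * H x ∂μ := by
            refine lintegral_congr fun x => ?_
            conv_rhs => rw [← ENNReal.rpow_one (H x), ← ENNReal.rpow_mul,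
              ← ENNReal.rpow_add_of_nonneg _ _ (by linarith) zero_le_one]
            congr 1; ring
        _ ≤ ∫⁻ x, H x ^ (r - 1) * G x ∂μ := by gcongr with x; exact hHG x
        _ = ∫⁻ x, ∫⁻ y, H x ^ (r - 1) * g x y ∂ν ∂μ := by
            refine lintegral_congr fun x => ?_
            exact (lintegral_const_mul _ (hg.comp measurable_prodMk_left)).symm
        _ = ∫⁻ y, ∫⁻ x, H x ^ (r - 1) * g x y ∂μ ∂ν := lintegral_lintegral_swap
            (((hH.comp measurable_fst).pow_const _).mul hg).aemeasurable
        _ ≤ ∫⁻ y, (∫⁻ x, g x y ^ r ∂μ) ^ (1 / r) * I ^ (1 / (r / (r - 1))) ∂ν := by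
            refine lintegral_mono fun y => ?_
            have := ENNReal.lintegral_mul_le_Lp_mul_Lq μ hconj
              (f := fun x => g x y) (g := fun x => H x ^ (r - 1))
              (hg.comp measurable_prodMk_right).aemeasurable (hH.pow_const _).aemeasurable
            simp only [Pi.mul_apply, ← ENNReal.rpow_mul] at this
            rw [mul_div_cancel₀ _ (by linarith : r - 1 ≠ 0)] at this
            simpa only [mul_comm] using this
        _ = K * I ^ (1 / (r / (r - 1))) := by
            rw [lintegral_mul_const']
            exact ENNReal.rpow_ne_top_of_nonneg (by
              have : 0 < r - 1 := by linarith
              positivity) hfin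
    have h2 : I ^ (1 / r) * I ^ (1 / (r / (r - 1))) ≤ K * I ^ (1 / (r / (r - 1))) := by
      rw [← ENNReal.rpow_add _ _ hI0 hfin]
      convert h1
      conv_rhs => rw [← ENNReal.rpow_one I]
      congr 1
      field_simp
      ring
    have h3 : I ^ (1 / r) ≤ K := by
      have hne : I ^ (1 / (r / (r - 1))) ≠ 0 := by
        simp [ENNReal.rpow_eq_zero_iff, hI0, hfin]
      have hnt : I ^ (1 / (r / (r - 1))) ≠ ∞ := by
        simp [ENNReal.rpow_eq_top_iff, hI0, hfin]
      exact (ENNReal.mul_le_mul_iff_left hne hnt).1 h2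
    calc I = (I ^ (1 / r)) ^ r := by
          rw [← ENNReal.rpow_mul, one_div, inv_mul_cancel₀ hr0.ne', ENNReal.rpow_one]
      _ ≤ K ^ r := ENNReal.rpow_le_rpow h3 hr0.le
  have hfinal : ∫⁻ x, G x ^ r ∂μ ≤ K ^ r := by
    let H : ℕ → X → ℝ≥0∞ := fun n => (spanningSets μ n).indicator fun x => min (G x) n
    have hHm : ∀ n, Measurable (H n) := fun n =>
      (hG.min measurable_const).indicator (measurableSet_spanningSets μ n)
    have hHK : ∀ n, ∫⁻ x, H n x ^ r ∂μ ≤ K ^ r := by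
      intro n
      refine key (H n) (hHm n) (fun x => ?_) (ne_of_lt ?_)
      · exact (indicator_le_self' (fun _ _ => zero_le) x).trans (min_le_left _ _)
      · calc ∫⁻ x, H n x ^ r ∂μ
            ≤ ∫⁻ x, (spanningSets μ n).indicator (fun _ => (n : ℝ≥0∞) ^ r) x ∂μ := by
              refine lintegral_mono fun x => ?_
              simp only [H, indicator]
              split_ifs
              · exact ENNReal.rpow_le_rpow (min_le_right _ _) hr0.le
              · rw [ENNReal.zero_rpow_of_pos hr0]
          _ = (n : ℝ≥0∞) ^ r * μ (spanningSets μ n) :=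
              lintegral_indicator_const (measurableSet_spanningSets μ n) _
          _ < ∞ := ENNReal.mul_lt_top
              (ENNReal.rpow_lt_top_of_nonneg hr0.le (ENNReal.natCast_ne_top n))
              (measure_spanningSets_lt_top μ n)
    have hlim : ∀ x, Tendsto (fun n => H n x ^ r) atTop (𝓝 (G x ^ r)) := by
      intro x
      refine (ENNReal.continuous_rpow_const.tendsto _).comp ?_
      have h1 : Tendsto (fun n : ℕ => min (G x) (n : ℝ≥0∞)) atTop (𝓝 (min (G x) ∞)) :=
        tendsto_const_nhds.min ENNReal.tendsto_nat_nhds_top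
      rw [min_top_right] at h1
      refine h1.congr' ?_
      obtain ⟨N, hN⟩ := mem_iUnion.1 ((iUnion_spanningSets μ).symm ▸ mem_univ x :
        x ∈ ⋃ i, spanningSets μ i)
      filter_upwards [eventually_ge_atTop N] with n hn
      exact (indicator_of_mem (monotone_spanningSets μ hn hN) fun x => min (G x) (n : ℝ≥0∞)).symm
    calc ∫⁻ x, G x ^ r ∂μ = ∫⁻ x, liminf (fun n => H n x ^ r) atTop ∂μ :=
          lintegral_congr fun x => (hlim x).liminf_eq.symm
      _ ≤ liminf (fun n => ∫⁻ x, H n x ^ r ∂μ) atTop :=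
          lintegral_liminf_le fun n => (hHm n).pow_const _
      _ ≤ liminf (fun _ : ℕ => K ^ r) atTop := liminf_le_liminf (.of_forall hHK)
      _ = K ^ r := liminf_const _
  calc (∫⁻ x, G x ^ r ∂μ) ^ (1 / r) ≤ (K ^ r) ^ (1 / r) :=
        ENNReal.rpow_le_rpow hfinal (by positivity)
    _ = K := by rw [← ENNReal.rpow_mul, mul_one_div_cancel hr0.ne', ENNReal.rpow_one]

/-- The constant in the interpolation estimate. -/
noncomputable def interpolationConst (r : ℝ) : ℝ≥0∞ :=
  ENNReal.ofReal r * 4 * (2 ^ (r - 2) / ENNReal.ofReal (r - 2))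

lemma interpolationConst_ne_top {r : ℝ} (hr : 2 < r) : interpolationConst r ≠ ∞ := by
  have h : ENNReal.ofReal (r - 2) ≠ 0 := by simpa using hr
  exact ENNReal.mul_ne_top (ENNReal.mul_ne_top ENNReal.ofReal_ne_top (by simp))
    (ENNReal.div_ne_top (ENNReal.rpow_ne_top_of_nonneg (by linarith) (by simp)) h)

/-- For an integral operator with kernel bounded by `A` which contracts `L²`, the distribution
function of `T f` is controlled by the part of `f` where `f` is small. -/
lemma measure_lt_enorm_integral_kernel_le {X : Type*} [MeasurableSpace X] (μ : Measure X)
    [SFinite μ] {k : X → X → ℂ} (hk : StronglyMeasurable (Function.uncurry k)) {A : ℝ≥0∞}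
    (hA0 : A ≠ 0) (hA : A ≠ ∞) (hkA : ∀ x y, ‖k x y‖ₑ ≤ A)
    (hL2 : ∀ g : X → ℂ, StronglyMeasurable g → Integrable g μ →
      ∫⁻ x, ‖∫ y, k x y * g y ∂μ‖ₑ ^ (2 : ℝ) ∂μ ≤ ∫⁻ x, ‖g x‖ₑ ^ (2 : ℝ) ∂μ)
    {s : ℝ} (hs : 0 < s) {f : X → ℂ} (hf : StronglyMeasurable f) (hfi : Integrable f μ)
    (hN0 : ∫⁻ x, ‖f x‖ₑ ^ (s + 1) ∂μ ≠ 0) (hN : ∫⁻ x, ‖f x‖ₑ ^ (s + 1) ∂μ ≠ ∞)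
    {l : ℝ} (hl : 0 < l) :
    μ {x | ENNReal.ofReal l < ‖∫ y, k x y * f y ∂μ‖ₑ} ≤ ENNReal.ofReal (4 * l ^ (-2 : ℝ)) *
      ∫⁻ x, (if ENNReal.ofReal l < 2 * (A * ∫⁻ x, ‖f x‖ₑ ^ (s + 1) ∂μ) / ‖f x‖ₑ ^ s
        then ‖f x‖ₑ ^ (2 : ℝ) else 0) ∂μ := by
  set N := ∫⁻ x, ‖f x‖ₑ ^ (s + 1) ∂μ with hNdef
  set S : Set X := {x | ENNReal.ofReal l < 2 * (A * N) / ‖f x‖ₑ ^ s} with hS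
  have hSm : MeasurableSet S := measurableSet_lt measurable_const
    (measurable_const.div (hf.enorm.pow_const _))
  have hinteg : ∀ g : X → ℂ, Integrable g μ → ∀ x, Integrable (fun y => k x y * g y) μ := by
    intro g hg x
    refine hg.bdd_mul (c := A.toReal) (hk.comp_measurable
      measurable_prodMk_left).aestronglyMeasurable (.of_forall fun y => ?_)
    rw [← toReal_enorm]
    exact ENNReal.toReal_mono hA (hkA x y)
  have hfs : Integrable (S.indicator f) μ := hfi.indicator hSm
  have hfb : Integrable (Sᶜ.indicator f) μ := hfi.indicator hSm.compl
  have hbig : ∀ x, ‖∫ y, k x y * Sᶜ.indicator f y ∂μ‖ₑ ≤ ENNReal.ofReal l / 2 := by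
    intro x
    have h1 : ‖∫ y, k x y * Sᶜ.indicator f y ∂μ‖ₑ ≤ A * ∫⁻ y, ‖Sᶜ.indicator f y‖ₑ ∂μ := by
      refine (enorm_integral_le_lintegral_enorm _).trans ?_
      rw [← lintegral_const_mul' _ _ hA]
      refine lintegral_mono fun y => ?_
      rw [enorm_mul]
      gcongr
      exact hkA x y
    have h2 : 2 * (A * N) * ∫⁻ y, ‖Sᶜ.indicator f y‖ₑ ∂μ ≤ ENNReal.ofReal l * N := by
      rw [← lintegral_const_mul' _ _ (by finiteness), show N = _ from hNdef,
        ← lintegral_const_mul' _ _ ENNReal.ofReal_ne_top]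
      refine lintegral_mono fun y => ?_
      by_cases hy : y ∈ S
      · simp [hy]
      · rw [indicator_of_mem (show y ∈ Sᶜ from hy), ENNReal.rpow_add_of_nonneg _ _ hs.le zero_le_one,
          ENNReal.rpow_one, ← mul_assoc (ENNReal.ofReal l)]
        refine mul_le_mul_left ?_ _
        have hy' : 2 * (A * N) / ‖f y‖ₑ ^ s ≤ ENNReal.ofReal l := not_lt.1 hy
        have hne : ‖f y‖ₑ ^ s ≠ 0 := by
          intro h0
          rw [h0, ENNReal.div_zero (by simp [hA0, hN0])] at hy'
          exact ENNReal.ofReal_ne_top (top_le_iff.1 hy')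
        have hnt : ‖f y‖ₑ ^ s ≠ ∞ := ENNReal.rpow_ne_top_of_nonneg hs.le enorm_ne_top
        exact (ENNReal.div_le_iff hne hnt).1 hy'
    refine h1.trans ?_
    rw [ENNReal.le_div_iff_mul_le (by simp) (by simp)]
    refine (ENNReal.mul_le_mul_iff_left hN0 hN).1 (le_trans (le_of_eq ?_) h2)
    ring
  have hsplit : ∀ x, ∫ y, k x y * f y ∂μ =
      (∫ y, k x y * S.indicator f y ∂μ) + ∫ y, k x y * Sᶜ.indicator f y ∂μ := by
    intro x
    rw [← integral_add (hinteg _ hfs x) (hinteg _ hfb x)]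
    congr 1 with y
    rw [← mul_add, ← indicator_self_add_compl S f]
    simp
  have hsub : {x | ENNReal.ofReal l < ‖∫ y, k x y * f y ∂μ‖ₑ} ⊆
      {x | (ENNReal.ofReal l / 2) ^ (2 : ℝ) ≤ ‖∫ y, k x y * S.indicator f y ∂μ‖ₑ ^ (2 : ℝ)} := by
    intro x hx
    simp only [mem_ofPred_eq] at hx ⊢
    refine ENNReal.rpow_le_rpow ?_ (by norm_num)
    by_contra hlt
    refine absurd hx (not_lt.2 ?_)
    rw [hsplit x, ← ENNReal.add_halves (ENNReal.ofReal l)]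
    exact (enorm_add_le _ _).trans (add_le_add (not_le.1 hlt).le (hbig x))
  have hmeas : Measurable fun x => ‖∫ y, k x y * S.indicator f y ∂μ‖ₑ ^ (2 : ℝ) := by
    have : StronglyMeasurable fun z : X × X => k z.1 z.2 * S.indicator f z.2 :=
      hk.mul ((hf.indicator hSm).comp_measurable measurable_snd)
    exact (this.integral_prod_right').enorm.pow_const _
  have hcheb := mul_meas_ge_le_lintegral (μ := μ) hmeas ((ENNReal.ofReal l / 2) ^ (2 : ℝ))
  have hconst : ENNReal.ofReal (4 * l ^ (-2 : ℝ)) * (ENNReal.ofReal l / 2) ^ (2 : ℝ) = 1 := by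
    rw [← ENNReal.ofReal_ofNat 2, ← ENNReal.ofReal_div_of_pos (by norm_num),
      ENNReal.ofReal_rpow_of_nonneg (by positivity) (by norm_num),
      ← ENNReal.ofReal_mul (by positivity), Real.rpow_neg hl.le, ← ENNReal.ofReal_one]
    congr 1
    norm_num
    field_simp
    norm_num
  calc μ {x | ENNReal.ofReal l < ‖∫ y, k x y * f y ∂μ‖ₑ}
      ≤ μ {x | (ENNReal.ofReal l / 2) ^ (2 : ℝ) ≤
          ‖∫ y, k x y * S.indicator f y ∂μ‖ₑ ^ (2 : ℝ)} := measure_mono hsub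
    _ = ENNReal.ofReal (4 * l ^ (-2 : ℝ)) * ((ENNReal.ofReal l / 2) ^ (2 : ℝ) *
          μ {x | (ENNReal.ofReal l / 2) ^ (2 : ℝ) ≤
          ‖∫ y, k x y * S.indicator f y ∂μ‖ₑ ^ (2 : ℝ)}) := by
        rw [← mul_assoc, hconst, one_mul]
    _ ≤ ENNReal.ofReal (4 * l ^ (-2 : ℝ)) * ∫⁻ x, ‖S.indicator f x‖ₑ ^ (2 : ℝ) ∂μ := by
        gcongr
        exact hcheb.trans (hL2 _ (hf.indicator hSm) hfs)
    _ = _ := by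
        congr 1
        refine lintegral_congr fun x => ?_
        by_cases hx : x ∈ S
        · exact (indicator_of_mem hx f).symm ▸ (if_pos (show _ < _ from hx)).symm
        · rw [indicator_of_notMem hx, if_neg (show ¬ _ < _ from hx)]
          simp

/-- An integral operator with kernel bounded by `A` that contracts `L²` maps
the dual of `L^r` to `L^r`. -/
lemma lintegral_enorm_integral_kernel_rpow_le {X : Type*} [MeasurableSpace X] (μ : Measure X)
    [SFinite μ] {k : X → X → ℂ} (hk : StronglyMeasurable (Function.uncurry k)) {A : ℝ≥0∞}
    (hA0 : A ≠ 0) (hA : A ≠ ∞) (hkA : ∀ x y, ‖k x y‖ₑ ≤ A)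
    (hL2 : ∀ g : X → ℂ, StronglyMeasurable g → Integrable g μ →
      ∫⁻ x, ‖∫ y, k x y * g y ∂μ‖ₑ ^ (2 : ℝ) ∂μ ≤ ∫⁻ x, ‖g x‖ₑ ^ (2 : ℝ) ∂μ)
    {r : ℝ} (hr : 2 < r) {f : X → ℂ} (hf : StronglyMeasurable f) (hfi : Integrable f μ)
    (hN : ∫⁻ x, ‖f x‖ₑ ^ (r / (r - 1)) ∂μ ≠ ∞) :
    ∫⁻ x, ‖∫ y, k x y * f y ∂μ‖ₑ ^ r ∂μ ≤ interpolationConst r *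
      (A * ∫⁻ x, ‖f x‖ₑ ^ (r / (r - 1)) ∂μ) ^ (r - 2) * ∫⁻ x, ‖f x‖ₑ ^ (r / (r - 1)) ∂μ := by
  have hr1 : 0 < r - 1 := by linarith
  have hr2 : 0 < r - 2 := by linarith
  have hexp : r / (r - 1) = 1 / (r - 1) + 1 := by field_simp; ring
  set N := ∫⁻ x, ‖f x‖ₑ ^ (r / (r - 1)) ∂μ with hNdef
  by_cases hN0 : N = 0
  · have hf0 : f =ᵐ[μ] 0 := by
      have := (lintegral_eq_zero_iff (hf.enorm.pow_const _)).1 hN0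
      filter_upwards [this] with x hx
      have h := (ENNReal.rpow_eq_zero_iff_of_pos (by positivity)).1 hx
      simpa using h
    have h0 : ∀ x, ∫ y, k x y * f y ∂μ = 0 := by
      intro x
      refine integral_eq_zero_of_ae ?_
      filter_upwards [hf0] with y hy
      simp [hy]
    simp [h0, ENNReal.zero_rpow_of_pos (show 0 < r by linarith)]
  set c : X → ℝ≥0∞ := fun x => 2 * (A * N) / ‖f x‖ₑ ^ (1 / (r - 1)) with hc
  have hcm : Measurable c := measurable_const.div (hf.enorm.pow_const _)
  have hTm : Measurable fun x => ‖∫ y, k x y * f y ∂μ‖ₑ := by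
    have : StronglyMeasurable fun z : X × X => k z.1 z.2 * f z.2 :=
      hk.mul (hf.comp_measurable measurable_snd)
    exact (this.integral_prod_right').enorm
  have hset : MeasurableSet {z : ℝ × X | ENNReal.ofReal z.1 < c z.2} :=
    measurableSet_lt (ENNReal.measurable_ofReal.comp measurable_fst) (hcm.comp measurable_snd)
  have hm : Measurable fun z : ℝ × X => ENNReal.ofReal (z.1 ^ (r - 2 - 1)) *
      (if ENNReal.ofReal z.1 < c z.2 then ‖f z.2‖ₑ ^ (2 : ℝ) else 0) :=
    (by fun_prop : Measurable fun z : ℝ × X => ENNReal.ofReal (z.1 ^ (r - 2 - 1))).mul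
      (Measurable.ite hset ((hf.enorm.comp measurable_snd).pow_const _) measurable_const)
  have hpt : ∀ x, ‖f x‖ₑ ^ (2 : ℝ) * c x ^ (r - 2) ≤
      (2 * (A * N)) ^ (r - 2) * ‖f x‖ₑ ^ (r / (r - 1)) := by
    intro x
    by_cases hx : ‖f x‖ₑ = 0
    · rw [hx]; simp
    rw [hc]
    simp only
    rw [ENNReal.div_rpow_of_nonneg _ _ hr2.le, div_eq_mul_inv, ← ENNReal.rpow_mul,
      ← ENNReal.rpow_neg, mul_left_comm, ← ENNReal.rpow_add _ _ hx enorm_ne_top]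
    apply le_of_eq
    congr 2
    field_simp
    ring
  calc ∫⁻ x, ‖∫ y, k x y * f y ∂μ‖ₑ ^ r ∂μ
      = ENNReal.ofReal r * ∫⁻ l in Ioi (0 : ℝ), ENNReal.ofReal (l ^ (r - 1)) *
          μ {x | ENNReal.ofReal l < ‖∫ y, k x y * f y ∂μ‖ₑ} :=
        lintegral_rpow_layercake μ hTm (by linarith)
    _ ≤ ENNReal.ofReal r * ∫⁻ l in Ioi (0 : ℝ), 4 * ∫⁻ x, ENNReal.ofReal (l ^ (r - 2 - 1)) *
          (if ENNReal.ofReal l < c x then ‖f x‖ₑ ^ (2 : ℝ) else 0) ∂μ := by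
        gcongr 1
        refine setLIntegral_mono' measurableSet_Ioi fun l (hl : 0 < l) => ?_
        rw [lintegral_const_mul' _ _ ENNReal.ofReal_ne_top]
        have h := measure_lt_enorm_integral_kernel_le μ hk hA0 hA hkA hL2
          (s := 1 / (r - 1)) (by positivity) hf hfi (by rwa [← hexp]) (by rwa [← hexp]) hl
        rw [← hexp] at h
        refine (mul_le_mul_right h _).trans (le_of_eq ?_)
        rw [← mul_assoc, ← ENNReal.ofReal_mul (by positivity), ← ENNReal.ofReal_ofNat 4,
          ← mul_assoc (ENNReal.ofReal _), ← ENNReal.ofReal_mul (by norm_num)]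
        congr 2
        rw [mul_left_comm, ← Real.rpow_add hl]
        congr 2
        ring
    _ = ENNReal.ofReal r * (4 * ∫⁻ x, ∫⁻ l in Ioi (0 : ℝ), ENNReal.ofReal (l ^ (r - 2 - 1)) *
          (if ENNReal.ofReal l < c x then ‖f x‖ₑ ^ (2 : ℝ) else 0) ∂volume ∂μ) := by
        rw [lintegral_const_mul' _ _ (by simp), lintegral_lintegral_swap hm.aemeasurable]
    _ = ENNReal.ofReal r * (4 * ∫⁻ x, ‖f x‖ₑ ^ (2 : ℝ) * c x ^ (r - 2) /
          ENNReal.ofReal (r - 2) ∂μ) := by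
        congr 2
        refine lintegral_congr fun x => ?_
        rw [mul_div_assoc, ← lintegral_rpow_of_lt (c x) hr2, ← lintegral_const_mul' _ _
          (ENNReal.rpow_ne_top_of_nonneg (by norm_num) enorm_ne_top)]
        refine lintegral_congr fun l => ?_
        split_ifs
        · rw [mul_comm]
        · simp
    _ ≤ ENNReal.ofReal r * (4 * ∫⁻ x, (2 * (A * N)) ^ (r - 2) / ENNReal.ofReal (r - 2) *
          ‖f x‖ₑ ^ (r / (r - 1)) ∂μ) := by
        gcongr with x
        rw [div_eq_mul_inv, div_eq_mul_inv, mul_right_comm ((2 * (A * N)) ^ (r - 2))]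
        exact mul_le_mul_left (hpt x) _
    _ = _ := by
        have hfin : (2 * (A * N)) ^ (r - 2) / ENNReal.ofReal (r - 2) ≠ ∞ :=
          ENNReal.div_ne_top (ENNReal.rpow_ne_top_of_nonneg hr2.le (by finiteness))
            (by simpa using hr)
        rw [lintegral_const_mul' _ _ hfin, ← hNdef, ENNReal.mul_rpow_of_nonneg _ _ hr2.le,
          interpolationConst, div_eq_mul_inv, div_eq_mul_inv]
        ring

lemma lintegral_comp_abs_eq (g : ℝ → ℝ≥0∞) :
    ∫⁻ s : ℝ, g |s| = 2 * ∫⁻ s in Ioi (0 : ℝ), g s := by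
  have h1 : ∫⁻ s in Ioi (0 : ℝ), g |s| = ∫⁻ s in Ioi (0 : ℝ), g s :=
    setLIntegral_congr_fun measurableSet_Ioi fun s hs => by rw [abs_of_pos hs]
  have h2 : ∫⁻ s in Iic (0 : ℝ), g |s| = ∫⁻ s in Ioi (0 : ℝ), g s := by
    rw [← h1, ← restrict_Iio_eq_restrict_Iic, ← lintegral_indicator measurableSet_Iio,
      ← lintegral_indicator measurableSet_Ioi, ← lintegral_neg_eq_self]
    refine lintegral_congr fun s => ?_
    simp [indicator]
  rw [← lintegral_add_compl _ (measurableSet_Ioi (a := (0 : ℝ))), compl_Ioi, h1, h2, two_mul]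

/-- The near part of the fractional integration kernel. -/
lemma lintegral_abs_rpow_near {α R : ℝ} (hα : α < 1) :
    ∫⁻ s : ℝ, (if ENNReal.ofReal |s| < ENNReal.ofReal R then
      ENNReal.ofReal (|s| ^ (-α)) else 0) =
      2 * (ENNReal.ofReal R ^ (1 - α) / ENNReal.ofReal (1 - α)) := by
  rw [lintegral_comp_abs_eq fun s => (if ENNReal.ofReal s < ENNReal.ofReal R then
      ENNReal.ofReal (s ^ (-α)) else 0), ← lintegral_rpow_of_lt _ (by linarith)]
  norm_num

/-- The far part of the fractional integration kernel. -/
lemma lintegral_abs_rpow_far {q R : ℝ} (hq : 0 < q) (hR : 0 < R) :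
    ∫⁻ s : ℝ, (if ENNReal.ofReal |s| < ENNReal.ofReal R then 0 else
      ENNReal.ofReal (|s| ^ (-(2 / q)))) ^ q = ENNReal.ofReal (2 / R) := by
  rw [lintegral_comp_abs_eq fun s => (if ENNReal.ofReal s < ENNReal.ofReal R then 0 else
      ENNReal.ofReal (s ^ (-(2 / q)))) ^ q]
  have e : ∀ l ∈ Ioi (0 : ℝ), (if ENNReal.ofReal l < ENNReal.ofReal R then 0 else
      ENNReal.ofReal (l ^ (-(2 / q)))) ^ q =
      (Ici R).indicator (fun l => ENNReal.ofReal (l ^ (-2 : ℝ))) l := by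
    intro l hl
    have hl' : 0 < l := hl
    simp only [indicator, mem_Ici, ENNReal.ofReal_lt_ofReal_iff_of_nonneg hl'.le]
    by_cases h : l < R
    · rw [if_pos h, if_neg (not_le.2 h), ENNReal.zero_rpow_of_pos hq]
    · rw [if_neg h, if_pos (not_lt.1 h), ENNReal.ofReal_rpow_of_nonneg (by positivity) hq.le,
        ← Real.rpow_mul hl'.le]
      congr 2
      field_simp
  rw [setLIntegral_congr_fun measurableSet_Ioi e, lintegral_indicator measurableSet_Ici,
    Measure.restrict_restrict measurableSet_Ici,
    inter_eq_self_of_subset_left (Ici_subset_Ioi.2 hR),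
    ← restrict_Ioi_eq_restrict_Ici,
    ← ofReal_integral_eq_lintegral_ofReal (integrableOn_Ioi_rpow_of_lt (by norm_num) hR)
      ((ae_restrict_mem measurableSet_Ioi).mono fun l hl =>
        Real.rpow_nonneg (hR.trans hl).le _), integral_Ioi_rpow_of_lt (by norm_num) hR,
    ← ENNReal.ofReal_ofNat 2, ← ENNReal.ofReal_mul (by norm_num)]
  congr 1
  norm_num [Real.rpow_neg_one]
  rfl

/-- The mass of the near part of the kernel at the critical radius. -/
noncomputable def hlsConst (q : ℝ) : ℝ := 2 / (1 - 2 / q) * (2 * 4 ^ q) ^ (1 - 2 / q)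

lemma hlsConst_pos {q : ℝ} (hq : 2 < q) : 0 < hlsConst q := by
  have : 0 < 1 - 2 / q := by
    rw [sub_pos, div_lt_one (by linarith)]; exact hq
  unfold hlsConst
  positivity

lemma measure_lt_fractionalIntegral_le {q : ℝ} (hq : 2 < q) {h : ℝ → ℝ≥0∞} (hh : Measurable h)
    (hN : ∫⁻ τ, h τ ^ (q / (q - 1)) ≤ 1) {l : ℝ} (hl : 0 < l) :
    volume {t : ℝ | ENNReal.ofReal l < ∫⁻ τ, ENNReal.ofReal (|t - τ| ^ (-(2 / q))) * h τ} ≤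
      ENNReal.ofReal (2 * hlsConst q * l ^ (1 - q)) *
        ∫⁻ τ, (if ENNReal.ofReal l < (ENNReal.ofReal (4 * hlsConst q) * h τ) ^ (1 / (q - 1))
          then h τ else 0) := by
  have hq0 : 0 < q := by linarith
  have hq1 : 0 < q - 1 := by linarith
  have hα : 2 / q < 1 := by rw [div_lt_one hq0]; exact hq
  have hK := hlsConst_pos hq
  set K1 := hlsConst q with hK1
  set R : ℝ := 2 * (4 / l) ^ q with hR
  have hR0 : 0 < R := by positivity
  set Kn : ℝ → ℝ≥0∞ := fun s => if ENNReal.ofReal |s| < ENNReal.ofReal R then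
      ENNReal.ofReal (|s| ^ (-(2 / q))) else 0 with hKn
  set Kf : ℝ → ℝ≥0∞ := fun s => if ENNReal.ofReal |s| < ENNReal.ofReal R then 0 else
      ENNReal.ofReal (|s| ^ (-(2 / q))) with hKf
  have hsetm : MeasurableSet {s : ℝ | ENNReal.ofReal |s| < ENNReal.ofReal R} :=
    measurableSet_lt (by fun_prop) measurable_const
  have hKnm : Measurable Kn := Measurable.ite hsetm (by fun_prop) measurable_const
  have hKfm : Measurable Kf := Measurable.ite hsetm measurable_const (by fun_prop)
  have hKsum : ∀ s, ENNReal.ofReal (|s| ^ (-(2 / q))) = Kn s + Kf s := by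
    intro s
    simp only [hKn, hKf]
    split_ifs <;> simp
  have hnear : ∫⁻ s, Kn s = ENNReal.ofReal (K1 * l ^ (2 - q)) := by
    rw [lintegral_abs_rpow_near hα, ENNReal.ofReal_rpow_of_nonneg hR0.le (by linarith),
      ← ENNReal.ofReal_div_of_pos (by linarith), ← ENNReal.ofReal_ofNat 2,
      ← ENNReal.ofReal_mul (by norm_num), hK1, hlsConst, hR, Real.div_rpow (by norm_num) hl.le,
      ← mul_div_assoc 2 ((4 : ℝ) ^ q), Real.div_rpow (by positivity) (by positivity), ← Real.rpow_mul hl.le,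
      show q * (1 - 2 / q) = -(2 - q) by field_simp; ring, Real.rpow_neg hl.le]
    congr 1
    simp only [OfNat.ofNat]
    field_simp
  have hfar : ∀ t, ∫⁻ τ, Kf (t - τ) * h τ ≤ ENNReal.ofReal (l / 4) := by
    intro t
    have hconj : q.HolderConjugate (q / (q - 1)) :=
      Real.HolderConjugate.conjExponent (by linarith)
    refine (ENNReal.lintegral_mul_le_Lp_mul_Lq volume hconj
      (f := fun τ => Kf (t - τ)) (g := h)
      (hKfm.comp (measurable_const.sub measurable_id)).aemeasurable hh.aemeasurable).trans ?_
    rw [lintegral_sub_left_eq_self (fun s => Kf s ^ q) t, lintegral_abs_rpow_far hq0 hR0]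
    calc ENNReal.ofReal (2 / R) ^ (1 / q) * (∫⁻ τ, h τ ^ (q / (q - 1))) ^ (1 / (q / (q - 1)))
        ≤ ENNReal.ofReal (2 / R) ^ (1 / q) * 1 ^ (1 / (q / (q - 1))) := by gcongr
      _ = ENNReal.ofReal (l / 4) := by
          rw [ENNReal.one_rpow, mul_one, ENNReal.ofReal_rpow_of_nonneg (by positivity)
            (by positivity)]
          congr 1
          rw [hR, ← div_div, div_self two_ne_zero, one_div, ← Real.inv_rpow (by positivity),
            inv_div, ← Real.rpow_mul (by positivity), mul_one_div_cancel hq0.ne', Real.rpow_one]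
  set B : Set ℝ := {τ | ENNReal.ofReal l <
    (ENNReal.ofReal (4 * K1) * h τ) ^ (1 / (q - 1))} with hB
  have hBm : MeasurableSet B :=
    measurableSet_lt measurable_const ((hh.const_mul _).pow_const _)
  have hsmall : ∀ t, ∫⁻ τ, Kn (t - τ) * Bᶜ.indicator h τ ≤ ENNReal.ofReal (l / 4) := by
    intro t
    have hpt : ∀ τ, ENNReal.ofReal (4 * K1) * Bᶜ.indicator h τ ≤
        ENNReal.ofReal (l ^ (q - 1)) := by
      intro τ
      by_cases hτ : τ ∈ B
      · simp [hτ]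
      · rw [indicator_of_mem (show τ ∈ Bᶜ from hτ)]
        have h1 : (ENNReal.ofReal (4 * K1) * h τ) ^ (1 / (q - 1)) ≤ ENNReal.ofReal l := not_lt.1 hτ
        have h2 := ENNReal.rpow_le_rpow h1 hq1.le
        rwa [← ENNReal.rpow_mul, one_div, inv_mul_cancel₀ hq1.ne', ENNReal.rpow_one,
          ENNReal.ofReal_rpow_of_nonneg hl.le hq1.le] at h2
    have h4 : ENNReal.ofReal (4 * K1) ≠ 0 := by simpa using hK
    refine (ENNReal.mul_le_mul_iff_right h4 ENNReal.ofReal_ne_top).1 ?_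
    calc ENNReal.ofReal (4 * K1) * ∫⁻ τ, Kn (t - τ) * Bᶜ.indicator h τ
        = ∫⁻ τ, Kn (t - τ) * (ENNReal.ofReal (4 * K1) * Bᶜ.indicator h τ) := by
          rw [← lintegral_const_mul' _ _ ENNReal.ofReal_ne_top]
          simp only [mul_left_comm]
      _ ≤ ∫⁻ τ, Kn (t - τ) * ENNReal.ofReal (l ^ (q - 1)) := by
          gcongr with τ; exact hpt τ
      _ = ENNReal.ofReal (K1 * l ^ (2 - q)) * ENNReal.ofReal (l ^ (q - 1)) := by
          rw [lintegral_mul_const' _ _ ENNReal.ofReal_ne_top, lintegral_sub_left_eq_self Kn t,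
            hnear]
      _ = ENNReal.ofReal (4 * K1) * ENNReal.ofReal (l / 4) := by
          rw [← ENNReal.ofReal_mul (by positivity), ← ENNReal.ofReal_mul (by positivity), mul_assoc,
            ← Real.rpow_add hl, show 2 - q + (q - 1) = 1 by ring, Real.rpow_one]
          congr 1
          ring
  have hsplit : ∀ t, ∫⁻ τ, ENNReal.ofReal (|t - τ| ^ (-(2 / q))) * h τ =
      (∫⁻ τ, Kn (t - τ) * B.indicator h τ) + (∫⁻ τ, Kn (t - τ) * Bᶜ.indicator h τ) +
        ∫⁻ τ, Kf (t - τ) * h τ := by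
    intro t
    have hKt : Measurable fun τ => Kn (t - τ) := hKnm.comp (measurable_const.sub measurable_id)
    have hm1 : Measurable fun τ => Kn (t - τ) * B.indicator h τ := hKt.mul (hh.indicator hBm)
    rw [← lintegral_add_left hm1, ← lintegral_add_right]
    · refine lintegral_congr fun τ => ?_
      rw [hKsum, ← mul_add, add_mul]
      congr 2
      exact (congrFun (indicator_self_add_compl B h) τ).symm
    · exact (hKfm.comp (measurable_const.sub measurable_id)).mul hh
  have hsub : {t : ℝ | ENNReal.ofReal l < ∫⁻ τ, ENNReal.ofReal (|t - τ| ^ (-(2 / q))) * h τ} ⊆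
      {t | ENNReal.ofReal (l / 2) ≤ ∫⁻ τ, Kn (t - τ) * B.indicator h τ} := by
    intro t ht
    by_contra hlt
    have hlt' : ∫⁻ τ, Kn (t - τ) * B.indicator h τ ≤ ENNReal.ofReal (l / 2) :=
      (not_le.1 hlt).le
    refine absurd (show ENNReal.ofReal l < _ from ht) (not_lt.2 ?_)
    rw [hsplit t]
    refine (add_le_add (add_le_add hlt' (hsmall t)) (hfar t)).trans (le_of_eq ?_)
    rw [← ENNReal.ofReal_add (by positivity) (by positivity),
      ← ENNReal.ofReal_add (by positivity) (by positivity)]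
    congr 1
    ring
  have hprod : Measurable fun z : ℝ × ℝ => Kn (z.1 - z.2) * B.indicator h z.2 :=
    (hKnm.comp (measurable_fst.sub measurable_snd)).mul ((hh.indicator hBm).comp measurable_snd)
  have hcheb := mul_meas_ge_le_lintegral (μ := volume)
    (hprod.lintegral_prod_right' (ν := volume)) (ENNReal.ofReal (l / 2))
  have hmass : ∫⁻ t, ∫⁻ τ, Kn (t - τ) * B.indicator h τ =
      ENNReal.ofReal (K1 * l ^ (2 - q)) * ∫⁻ τ, B.indicator h τ := by
    rw [lintegral_lintegral_swap hprod.aemeasurable,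
      ← lintegral_const_mul' _ _ ENNReal.ofReal_ne_top]
    refine lintegral_congr fun τ => ?_
    have hKτ : Measurable fun t => Kn (t - τ) := hKnm.comp (measurable_id.sub measurable_const)
    rw [lintegral_mul_const _ hKτ, lintegral_sub_right_eq_self Kn τ, hnear]
  simp only at hcheb
  rw [hmass] at hcheb
  calc volume {t : ℝ | ENNReal.ofReal l < ∫⁻ τ, ENNReal.ofReal (|t - τ| ^ (-(2 / q))) * h τ}
      ≤ volume {t | ENNReal.ofReal (l / 2) ≤ ∫⁻ τ, Kn (t - τ) * B.indicator h τ} :=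
        measure_mono hsub
    _ = ENNReal.ofReal (2 / l) * (ENNReal.ofReal (l / 2) *
          volume {t | ENNReal.ofReal (l / 2) ≤ ∫⁻ τ, Kn (t - τ) * B.indicator h τ}) := by
        rw [← mul_assoc, ← ENNReal.ofReal_mul (by positivity), div_mul_div_cancel₀ hl.ne',
          div_self two_ne_zero, ENNReal.ofReal_one, one_mul]
    _ ≤ ENNReal.ofReal (2 / l) * (ENNReal.ofReal (K1 * l ^ (2 - q)) *
          ∫⁻ τ, B.indicator h τ) := by gcongr
    _ = _ := by
        rw [← mul_assoc, ← ENNReal.ofReal_mul (by positivity)]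
        congr 2
        · rw [show (2 - q) = 1 + (1 - q) by ring, Real.rpow_add hl, Real.rpow_one]
          field_simp
        · ext τ
          simp only [indicator, hB, mem_ofPred_eq]

lemma lintegral_fractionalIntegral_rpow_le_of_le_one {q : ℝ} (hq : 2 < q) {h : ℝ → ℝ≥0∞}
    (hh : Measurable h) (hN : ∫⁻ τ, h τ ^ (q / (q - 1)) ≤ 1) :
    ∫⁻ t : ℝ, (∫⁻ τ, ENNReal.ofReal (|t - τ| ^ (-(2 / q))) * h τ) ^ q ≤
      ENNReal.ofReal q * (ENNReal.ofReal (2 * hlsConst q) *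
        ENNReal.ofReal (4 * hlsConst q) ^ (1 / (q - 1))) := by
  have hq0 : 0 < q := by linarith
  have hq1 : 0 < q - 1 := by linarith
  have hK := hlsConst_pos hq
  set K1 := hlsConst q with hK1
  set c : ℝ → ℝ≥0∞ := fun τ => (ENNReal.ofReal (4 * K1) * h τ) ^ (1 / (q - 1)) with hc
  have hcm : Measurable c := (hh.const_mul _).pow_const _
  have hprod : Measurable fun z : ℝ × ℝ =>
      ENNReal.ofReal (|z.1 - z.2| ^ (-(2 / q))) * h z.2 := by fun_prop
  have hset : MeasurableSet {z : ℝ × ℝ | ENNReal.ofReal z.1 < c z.2} :=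
    measurableSet_lt (ENNReal.measurable_ofReal.comp measurable_fst) (hcm.comp measurable_snd)
  have hm : Measurable fun z : ℝ × ℝ => (if ENNReal.ofReal z.1 < c z.2 then h z.2 else 0) :=
    Measurable.ite hset (hh.comp measurable_snd) measurable_const
  calc ∫⁻ t : ℝ, (∫⁻ τ, ENNReal.ofReal (|t - τ| ^ (-(2 / q))) * h τ) ^ q
      = ENNReal.ofReal q * ∫⁻ l in Ioi (0 : ℝ), ENNReal.ofReal (l ^ (q - 1)) * volume {t : ℝ |
          ENNReal.ofReal l < ∫⁻ τ, ENNReal.ofReal (|t - τ| ^ (-(2 / q))) * h τ} :=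
        lintegral_rpow_layercake volume hprod.lintegral_prod_right' hq0
    _ ≤ ENNReal.ofReal q * ∫⁻ l in Ioi (0 : ℝ), ENNReal.ofReal (2 * K1) *
          ∫⁻ τ, (if ENNReal.ofReal l < c τ then h τ else 0) := by
        gcongr 1
        refine setLIntegral_mono' measurableSet_Ioi fun l (hl : 0 < l) => ?_
        refine (mul_le_mul_right (measure_lt_fractionalIntegral_le hq hh hN hl) _).trans
          (le_of_eq ?_)
        rw [← mul_assoc, ← ENNReal.ofReal_mul (by positivity), mul_left_comm, ← Real.rpow_add hl,
          show q - 1 + (1 - q) = 0 by ring, Real.rpow_zero, mul_one]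
    _ = ENNReal.ofReal q * (ENNReal.ofReal (2 * K1) * ∫⁻ τ, ∫⁻ l in Ioi (0 : ℝ),
          (if ENNReal.ofReal l < c τ then h τ else 0)) := by
        rw [lintegral_const_mul' _ _ ENNReal.ofReal_ne_top,
          lintegral_lintegral_swap hm.aemeasurable]
    _ = ENNReal.ofReal q * (ENNReal.ofReal (2 * K1) * ∫⁻ τ, h τ * c τ) := by
        congr 2
        refine lintegral_congr fun τ => ?_
        have h1 := lintegral_rpow_of_lt (c τ) one_pos
        simp only [sub_self, Real.rpow_zero, ENNReal.ofReal_one, ENNReal.rpow_one, div_one] at h1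
        conv_rhs => rw [← h1]
        rw [← lintegral_const_mul _ (Measurable.ite (measurableSet_lt
          ENNReal.measurable_ofReal measurable_const) measurable_const measurable_const)]
        simp
    _ = ENNReal.ofReal q * (ENNReal.ofReal (2 * K1) *
          (ENNReal.ofReal (4 * K1) ^ (1 / (q - 1)) * ∫⁻ τ, h τ ^ (q / (q - 1)))) := by
        rw [← lintegral_const_mul' _ _
          (ENNReal.rpow_ne_top_of_nonneg (by positivity) ENNReal.ofReal_ne_top)]
        congr 2
        refine lintegral_congr fun τ => ?_
        rw [hc]
        simp only
        rw [ENNReal.mul_rpow_of_nonneg _ _ (by positivity),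
          show q / (q - 1) = 1 + 1 / (q - 1) by field_simp; ring,
          ENNReal.rpow_add_of_nonneg _ _ zero_le_one (by positivity), ENNReal.rpow_one]
        ring
    _ ≤ ENNReal.ofReal q * (ENNReal.ofReal (2 * K1) *
          (ENNReal.ofReal (4 * K1) ^ (1 / (q - 1)) * 1)) := by gcongr
    _ = _ := by rw [mul_one]

/-- The Hardy–Littlewood–Sobolev inequality for fractional integration of order `1 - 2 / q`. -/
lemma exists_lintegral_fractionalIntegral_rpow_le {q : ℝ} (hq : 2 < q) :
    ∃ C : ℝ≥0∞, C ≠ ∞ ∧ ∀ h : ℝ → ℝ≥0∞, Measurable h → ∫⁻ τ, h τ ^ (q / (q - 1)) ≠ ∞ →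
      (∫⁻ t : ℝ, (∫⁻ τ, ENNReal.ofReal (|t - τ| ^ (-(2 / q))) * h τ) ^ q) ^ (1 / q) ≤
        C * (∫⁻ τ, h τ ^ (q / (q - 1))) ^ (1 / (q / (q - 1))) := by
  have hq0 : 0 < q := by linarith
  have hq1 : 0 < q - 1 := by linarith
  set D := ENNReal.ofReal q * (ENNReal.ofReal (2 * hlsConst q) *
        ENNReal.ofReal (4 * hlsConst q) ^ (1 / (q - 1))) with hD
  have hDt : D ≠ ∞ := ENNReal.mul_ne_top ENNReal.ofReal_ne_top
    (ENNReal.mul_ne_top ENNReal.ofReal_ne_top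
      (ENNReal.rpow_ne_top_of_nonneg (by positivity) ENNReal.ofReal_ne_top))
  refine ⟨D ^ (1 / q), ENNReal.rpow_ne_top_of_nonneg (by positivity) hDt, fun h hh hfin => ?_⟩
  set p := q / (q - 1) with hp
  have hp0 : 0 < p := by positivity
  set N := ∫⁻ τ, h τ ^ p with hN
  by_cases hN0 : N = 0
  · have h0 : h =ᵐ[volume] 0 := by
      filter_upwards [(lintegral_eq_zero_iff (hh.pow_const _)).1 hN0] with x hx
      exact (ENNReal.rpow_eq_zero_iff_of_pos hp0).1 hx
    have h1 : ∀ t : ℝ, ∫⁻ τ, ENNReal.ofReal (|t - τ| ^ (-(2 / q))) * h τ = 0 := by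
      intro t
      rw [lintegral_eq_zero_iff (by fun_prop)]
      filter_upwards [h0] with τ hτ
      simp [hτ]
    simp [h1, ENNReal.zero_rpow_of_pos hq0, hq0]
  set c := N ^ (1 / p) with hc
  have hc0 : c ≠ 0 := by simp [hc, ENNReal.rpow_eq_zero_iff, hN0, hfin]
  have hct : c ≠ ∞ := ENNReal.rpow_ne_top_of_nonneg (by positivity) hfin
  have hcp : c ^ p = N := by
    rw [hc, ← ENNReal.rpow_mul, one_div, inv_mul_cancel₀ hp0.ne', ENNReal.rpow_one]
  have hnorm : ∫⁻ τ, (c⁻¹ * h τ) ^ p ≤ 1 := by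
    simp only [ENNReal.mul_rpow_of_nonneg _ _ hp0.le]
    rw [lintegral_const_mul' _ _ (ENNReal.rpow_ne_top_of_nonneg hp0.le (by simpa using hc0)),
      ENNReal.inv_rpow, hcp, ← hN, ENNReal.inv_mul_cancel hN0 hfin]
  have key := lintegral_fractionalIntegral_rpow_le_of_le_one hq (hh.const_mul c⁻¹) hnorm
  have hscale : ∀ t : ℝ, (∫⁻ τ, ENNReal.ofReal (|t - τ| ^ (-(2 / q))) * h τ) ^ q =
      c ^ q * (∫⁻ τ, ENNReal.ofReal (|t - τ| ^ (-(2 / q))) * (c⁻¹ * h τ)) ^ q := by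
    intro t
    rw [← ENNReal.mul_rpow_of_nonneg _ _ hq0.le, ← lintegral_const_mul' _ _ hct]
    congr 2 with τ
    rw [mul_left_comm, ← mul_assoc c, ENNReal.mul_inv_cancel hc0 hct, one_mul]
  simp only [hscale]
  rw [lintegral_const_mul' _ _ (ENNReal.rpow_ne_top_of_nonneg hq0.le hct)]
  calc (c ^ q * ∫⁻ t : ℝ, (∫⁻ τ, ENNReal.ofReal (|t - τ| ^ (-(2 / q))) * (c⁻¹ * h τ)) ^ q) ^ (1 / q)
      ≤ (c ^ q * D) ^ (1 / q) := by gcongr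
    _ = D ^ (1 / q) * c := by
        rw [ENNReal.mul_rpow_of_nonneg _ _ (by positivity), ← ENNReal.rpow_mul,
          mul_one_div_cancel hq0.ne', ENNReal.rpow_one, mul_comm]

lemma besselJ_eq_besselEntire (ν : ℝ) {z : ℝ} (hz : 0 < z) :
    besselJ (ν : ℂ) z = (((z / 2) ^ ν * besselEntire ν (z ^ 2 / 4) : ℝ) : ℂ) := by
  rw [besselJ, tsum_congr (besselJ_term ν z hz), ← Complex.ofReal_tsum, tsum_mul_left, besselEntire]

/-- The modulus of the prefactor of the Schrödinger kernel. -/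
noncomputable def kernelAmplitude (a t : ℝ) : ℝ :=
  (2 * |t|) ^ (-(a + 1) / 2) * 2 ^ ((1 - a) / 2)

/-- The sign of `t`, with value `-1` at zero. -/
noncomputable def timeSign (t : ℝ) : ℝ := if 0 < t then 1 else -1

/-- The Schrödinger kernel written as a unimodular multiple of a Hankel kernel. -/
noncomputable def propagatorKernel (a t x y : ℝ) : ℂ :=
  Complex.exp (((timeSign t * (x ^ 2 / (4 * |t|) - (a + 1) * Real.pi / 4) : ℝ) : ℂ) * Complex.I) *
    kernelAmplitude a t *
    (((besselEntire ((a - 1) / 2) (1 / (16 * t ^ 2) * x ^ 2 * y ^ 2) : ℝ) : ℂ) *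
      Complex.exp (((timeSign t * (y ^ 2 / (4 * |t|)) : ℝ) : ℂ) * Complex.I))

lemma kernelAmplitude_zero {a : ℝ} (ha : 0 ≤ a) : kernelAmplitude a 0 = 0 := by
  have : -(a + 1) / 2 ≠ 0 := by intro h; linarith
  rw [kernelAmplitude, abs_zero, mul_zero, Real.zero_rpow this, zero_mul]

lemma Skernel_eq_propagatorKernel {a x y : ℝ} (ha : 0 ≤ a) (hx : 0 < x) (hy : 0 < y) (t : ℝ) :
    Skernel a x y t = propagatorKernel a t x y := by
  by_cases ht : t = 0
  · subst ht
    have : -(a + 1) / 2 ≠ 0 := by intro h; linarith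
    rw [propagatorKernel, kernelAmplitude_zero ha, Skernel, if_neg (lt_irrefl _), abs_zero,
      mul_zero (2 : ℝ), Real.zero_rpow this]
    simp
  have ht' : 0 < |t| := abs_pos.2 ht
  set z := x * y / (2 * |t|) with hz
  have hz0 : 0 < z := by positivity
  have hzz : z ^ 2 / 4 = 1 / (16 * t ^ 2) * x ^ 2 * y ^ 2 := by
    rw [hz, ← sq_abs t]
    field_simp
    norm_num
  have hpow : z ^ ((1 - a) / 2) * (z / 2) ^ ((a - 1) / 2) = 2 ^ ((1 - a) / 2) := by
    rw [Real.div_rpow hz0.le two_pos.le, ← mul_div_assoc, ← Real.rpow_add hz0,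
      show (1 - a) / 2 + (a - 1) / 2 = 0 by ring, Real.rpow_zero, one_div,
      ← Real.rpow_neg two_pos.le]
    congr 1
    ring
  have hmid : (((2 * |t|) ^ (-(a + 1) / 2) : ℝ) : ℂ) * ((z ^ ((1 - a) / 2) : ℝ) : ℂ) *
      besselJ (((a - 1) / 2 : ℝ) : ℂ) z = (kernelAmplitude a t : ℂ) *
        ((besselEntire ((a - 1) / 2) (1 / (16 * t ^ 2) * x ^ 2 * y ^ 2) : ℝ) : ℂ) := by
    rw [besselJ_eq_besselEntire _ hz0, hzz, kernelAmplitude, ← hpow]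
    push_cast
    ring
  have hexp : ∀ σ : ℝ,
      Complex.exp (((σ * (x ^ 2 / (4 * |t|) - (a + 1) * Real.pi / 4) : ℝ) : ℂ) * Complex.I) *
        Complex.exp (((σ * (y ^ 2 / (4 * |t|)) : ℝ) : ℂ) * Complex.I) =
      Complex.exp (-(σ * Complex.I) * (((a + 1) * Real.pi / 4 : ℝ) : ℂ)) *
        Complex.exp ((σ * Complex.I) * ((((x ^ 2 + y ^ 2) / (4 * |t|)) : ℝ) : ℂ)) := by
    intro σ
    rw [← Complex.exp_add, ← Complex.exp_add]
    congr 1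
    push_cast
    ring
  have hprop : propagatorKernel a t x y =
      Complex.exp (-(timeSign t * Complex.I) * (((a + 1) * Real.pi / 4 : ℝ) : ℂ)) *
        ((kernelAmplitude a t : ℂ) *
          ((besselEntire ((a - 1) / 2) (1 / (16 * t ^ 2) * x ^ 2 * y ^ 2) : ℝ) : ℂ)) *
        Complex.exp ((timeSign t * Complex.I) * ((((x ^ 2 + y ^ 2) / (4 * |t|)) : ℝ) : ℂ)) := by
    rw [mul_right_comm, ← hexp, propagatorKernel]
    ring
  rw [hprop, ← hmid, Skernel, timeSign, ← hz]
  split_ifs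
  · simp only [Complex.ofReal_one, one_mul, mul_assoc]
  · simp only [Complex.ofReal_neg, Complex.ofReal_one, neg_mul, one_mul, neg_neg, mul_assoc]

lemma measurable_timeSign : Measurable timeSign :=
  Measurable.ite measurableSet_Ioi measurable_const measurable_const

lemma measurable_propagatorKernel {a : ℝ} (ha : 0 ≤ a) :
    Measurable fun z : ℝ × ℝ × ℝ => propagatorKernel a z.1 z.2.1 z.2.2 := by
  have h1 := measurable_timeSign
  have h2 : Measurable (besselEntire ((a - 1) / 2)) :=
    (continuous_besselEntire (by linarith)).measurable
  unfold propagatorKernel kernelAmplitude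
  fun_prop

lemma kernelAmplitude_nonneg (a t : ℝ) : 0 ≤ kernelAmplitude a t := by
  unfold kernelAmplitude
  positivity

lemma norm_propagatorKernel (a t x y : ℝ) : ‖propagatorKernel a t x y‖ =
    kernelAmplitude a t * |besselEntire ((a - 1) / 2) (1 / (16 * t ^ 2) * x ^ 2 * y ^ 2)| := by
  rw [propagatorKernel, norm_mul, norm_mul, norm_mul, Complex.norm_exp_ofReal_mul_I,
    Complex.norm_exp_ofReal_mul_I, Complex.norm_real, Complex.norm_real,
    Real.norm_of_nonneg (kernelAmplitude_nonneg a t), one_mul, mul_one, Real.norm_eq_abs]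

lemma norm_propagatorKernel_le {a : ℝ} (ha : 0 ≤ a) (t x y : ℝ) :
    ‖propagatorKernel a t x y‖ ≤
      kernelAmplitude a t * (besselEntire ((a - 1) / 2) 0 + 1) := by
  rw [norm_propagatorKernel]
  refine mul_le_mul_of_nonneg_left ?_ (kernelAmplitude_nonneg a t)
  have := abs_besselEntire_le (ν := (a - 1) / 2) (by linarith)
    (w := 1 / (16 * t ^ 2) * x ^ 2 * y ^ 2) (by positivity)
  linarith

lemma kernelAmplitude_sq_mul {a t : ℝ} (ht : t ≠ 0) :
    kernelAmplitude a t ^ 2 * (1 / 4 * (1 / (16 * t ^ 2)) ^ (-((a + 1) / 2))) = 1 := by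
  have ht' : 0 < |t| := abs_pos.2 ht
  have h1 : (1 / (16 * t ^ 2)) ^ (-((a + 1) / 2)) = (2 * (2 * |t|)) ^ (a + 1) := by
    rw [Real.rpow_neg (by positivity), ← Real.inv_rpow (by positivity), one_div, inv_inv,
      show 16 * t ^ 2 = (2 * (2 * |t|)) ^ (2 : ℝ) by
        rw [Real.rpow_two, ← sq_abs t]; ring, ← Real.rpow_mul (by positivity)]
    congr 1
    ring
  have h2 : kernelAmplitude a t ^ 2 = (2 * |t|) ^ (-(a + 1)) * 2 ^ (1 - a) := by
    rw [kernelAmplitude, mul_pow, ← Real.rpow_two, ← Real.rpow_two, ← Real.rpow_mul (by positivity),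
      ← Real.rpow_mul (by positivity)]
    congr 2 <;> ring
  rw [h1, h2, Real.mul_rpow (y := 2 * |t|) two_pos.le (by positivity), Real.rpow_neg (by positivity)]
  have h3 : (0 : ℝ) < (2 * |t|) ^ (a + 1) := by positivity
  have h4 : (2 : ℝ) ^ (1 - a) * 2 ^ (a + 1) = 4 := by
    rw [← Real.rpow_add two_pos]; ring_nf; norm_num
  calc _ = ((2 * |t|) ^ (a + 1))⁻¹ * (2 * |t|) ^ (a + 1) *
        ((2 : ℝ) ^ (1 - a) * 2 ^ (a + 1)) / 4 := by ring
    _ = 1 := by rw [h4, inv_mul_cancel₀ h3.ne']; norm_num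

lemma enorm_rpow_two_eq_re_im (w : ℂ) :
    ‖w‖ₑ ^ (2 : ℝ) = ENNReal.ofReal (w.re ^ 2) + ENNReal.ofReal (w.im ^ 2) := by
  rw [← ofReal_norm, ENNReal.ofReal_rpow_of_nonneg (norm_nonneg _) (by norm_num),
    Real.rpow_two, Complex.sq_norm, Complex.normSq_apply,
    ← ENNReal.ofReal_add (by positivity) (by positivity)]
  congr 1
  ring

lemma lintegral_hankel_sq_le {a b : ℝ} (ha : 0 ≤ a) (hb : 0 < b) {f : ℝ → ℝ}
    (hf : Integrable f (weightMeasure a)) (hf2 : MemLp f 2 (weightMeasure a)) :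
    ∫⁻ x, ENNReal.ofReal (hankel a b f x ^ 2) ∂weightMeasure a ≤
      ENNReal.ofReal (1 / 4 * b ^ (-((a + 1) / 2))) *
        ∫⁻ x, ENNReal.ofReal (f x ^ 2) ∂weightMeasure a := by
  rw [← eLpNorm_two_sq, ← eLpNorm_two_sq]
  refine (pow_le_pow_left₀ zero_le (eLpNorm_hankel_le ha hb hf hf2) 2).trans (le_of_eq ?_)
  rw [mul_pow, hankelConst, ← ENNReal.rpow_natCast, ← ENNReal.rpow_mul]
  norm_num

/-- The Schrödinger propagator is a contraction of `L²`. -/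
lemma lintegral_propagator_sq_le {a t : ℝ} (ha : 0 ≤ a) (ht : t ≠ 0) {g : ℝ → ℂ}
    (hg : StronglyMeasurable g) (hgi : Integrable g (weightMeasure a)) :
    ∫⁻ x, ‖∫ y, propagatorKernel a t x y * g y ∂weightMeasure a‖ₑ ^ (2 : ℝ) ∂weightMeasure a ≤
      ∫⁻ x, ‖g x‖ₑ ^ (2 : ℝ) ∂weightMeasure a := by
  by_cases hfin : ∫⁻ x, ‖g x‖ₑ ^ (2 : ℝ) ∂weightMeasure a = ∞
  · rw [hfin]; exact le_top
  set b := 1 / (16 * t ^ 2) with hb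
  have hb0 : 0 < b := by positivity
  set G : ℝ → ℂ := fun y =>
    Complex.exp (((timeSign t * (y ^ 2 / (4 * |t|)) : ℝ) : ℂ) * Complex.I) * g y with hG
  have hGn : ∀ y, ‖G y‖ₑ = ‖g y‖ₑ := by
    intro y
    rw [hG]
    simp only
    rw [enorm_mul, ← ofReal_norm (Complex.exp _), Complex.norm_exp_ofReal_mul_I,
      ENNReal.ofReal_one, one_mul]
  have hGm : AEStronglyMeasurable G (weightMeasure a) := by
    refine (Continuous.aestronglyMeasurable ?_).mul hg.aestronglyMeasurable
    fun_prop
  have hGi : Integrable G (weightMeasure a) :=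
    ⟨hGm, by simpa only [HasFiniteIntegral, hGn] using hgi.2⟩
  have hG2 : MemLp G 2 (weightMeasure a) := by
    refine ⟨hGm, ?_⟩
    rw [eLpNorm_eq_lintegral_rpow_enorm_toReal (by simp) (by simp)]
    simp only [hGn, ENNReal.toReal_ofNat]
    exact ENNReal.rpow_lt_top_of_nonneg (by norm_num) hfin
  have hnorm : ∀ x, ‖∫ y, propagatorKernel a t x y * g y ∂weightMeasure a‖ₑ ^ (2 : ℝ) =
      ENNReal.ofReal (kernelAmplitude a t ^ 2) *
        (ENNReal.ofReal (hankel a b (fun y => (G y).re) x ^ 2) +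
          ENNReal.ofReal (hankel a b (fun y => (G y).im) x ^ 2)) := by
    intro x
    set I := ∫ y, ((besselEntire ((a - 1) / 2) (b * x ^ 2 * y ^ 2) : ℝ) : ℂ) * G y ∂weightMeasure a
      with hI
    have hIint : Integrable (fun y =>
        ((besselEntire ((a - 1) / 2) (b * x ^ 2 * y ^ 2) : ℝ) : ℂ) * G y) (weightMeasure a) := by
      refine hGi.bdd_mul (c := besselEntire ((a - 1) / 2) 0) ?_ (.of_forall fun y => ?_)
      · exact (Complex.continuous_ofReal.comp ((continuous_hankel_kernel ha b).comp
          (Continuous.prodMk_right x))).aestronglyMeasurable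
      · rw [Complex.norm_real]
        exact abs_besselEntire_le (by linarith) (by positivity)
    have h1 : ∫ y, propagatorKernel a t x y * g y ∂weightMeasure a =
        Complex.exp (((timeSign t * (x ^ 2 / (4 * |t|) - (a + 1) * Real.pi / 4) : ℝ) : ℂ) *
          Complex.I) * kernelAmplitude a t * I := by
      rw [hI, ← integral_const_mul]
      refine integral_congr_ae (.of_forall fun y => ?_)
      simp only [propagatorKernel, hG, hb]
      ring
    have hre : I.re = hankel a b (fun y => (G y).re) x := by
      have := integral_re hIint
      simp only [RCLike.re_to_complex, Complex.re_ofReal_mul] at this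
      rw [hankel, this]
    have him : I.im = hankel a b (fun y => (G y).im) x := by
      have := integral_im hIint
      simp only [RCLike.im_to_complex, Complex.im_ofReal_mul] at this
      rw [hankel, this]
    rw [h1, enorm_mul, enorm_mul, ← ofReal_norm (Complex.exp _),
      Complex.norm_exp_ofReal_mul_I, ENNReal.ofReal_one, one_mul,
      ENNReal.mul_rpow_of_nonneg _ _ (by norm_num), enorm_rpow_two_eq_re_im I, hre, him,
      ← ofReal_norm, Complex.norm_real, Real.norm_of_nonneg (kernelAmplitude_nonneg a t),
      ENNReal.ofReal_rpow_of_nonneg (kernelAmplitude_nonneg a t) (by norm_num), Real.rpow_two]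
  simp only [hnorm, ← hGn, enorm_rpow_two_eq_re_im]
  rw [lintegral_const_mul' _ _ ENNReal.ofReal_ne_top, lintegral_add_left, lintegral_add_left']
  · calc _ ≤ ENNReal.ofReal (kernelAmplitude a t ^ 2) *
          (ENNReal.ofReal (1 / 4 * b ^ (-((a + 1) / 2))) *
            ∫⁻ x, ENNReal.ofReal ((G x).re ^ 2) ∂weightMeasure a +
          ENNReal.ofReal (1 / 4 * b ^ (-((a + 1) / 2))) *
            ∫⁻ x, ENNReal.ofReal ((G x).im ^ 2) ∂weightMeasure a) := by
          gcongr
          · exact lintegral_hankel_sq_le ha hb0 hGi.re hG2.re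
          · exact lintegral_hankel_sq_le ha hb0 hGi.im hG2.im
      _ = _ := by
          rw [← mul_add, ← mul_assoc, ← ENNReal.ofReal_mul (by positivity), hb,
            kernelAmplitude_sq_mul ht, ENNReal.ofReal_one, one_mul]
  · exact ENNReal.measurable_ofReal.comp_aemeasurable (hGi.re.1.aemeasurable.pow_const 2)
  · exact ENNReal.measurable_ofReal.comp
      ((continuous_hankel ha hb0.le hGi.re).measurable.pow_const 2)

/-- The dispersive estimate for the Schrödinger propagator. -/
lemma exists_propagator_dispersive {a q r : ℝ} (ha : 0 ≤ a) (hr : 2 < r)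
    (hqr : 2 / q = (a + 1) * (1 / 2 - 1 / r)) :
    ∃ D : ℝ≥0∞, D ≠ ∞ ∧ ∀ t : ℝ, t ≠ 0 → ∀ f : ℝ → ℂ, StronglyMeasurable f →
      Integrable f (weightMeasure a) →
      ∫⁻ x, ‖f x‖ₑ ^ (r / (r - 1)) ∂weightMeasure a ≠ ∞ →
      (∫⁻ x, ‖∫ y, propagatorKernel a t x y * f y ∂weightMeasure a‖ₑ ^ r ∂weightMeasure a) ^ (1 / r)
        ≤ D * (ENNReal.ofReal (|t| ^ (-(2 / q))) *
          (∫⁻ x, ‖f x‖ₑ ^ (r / (r - 1)) ∂weightMeasure a) ^ (1 / (r / (r - 1)))) := by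
  have hr0 : 0 < r := by linarith
  have hr1 : 0 < r - 1 := by linarith
  have hr2 : 0 < r - 2 := by linarith
  have hB : 0 ≤ besselEntire ((a - 1) / 2) 0 :=
    (abs_nonneg _).trans (abs_besselEntire_le (by linarith) le_rfl)
  set κ : ℝ := 2 ^ (-(a + 1) / 2) * 2 ^ ((1 - a) / 2) * (besselEntire ((a - 1) / 2) 0 + 1) with hκ
  have hκ0 : 0 < κ := by positivity
  refine ⟨interpolationConst r ^ (1 / r) * ENNReal.ofReal (κ ^ ((r - 2) / r)),
    ENNReal.mul_ne_top (ENNReal.rpow_ne_top_of_nonneg (by positivity)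
      (interpolationConst_ne_top hr)) ENNReal.ofReal_ne_top, fun t ht f hf hfi hN => ?_⟩
  have ht' : 0 < |t| := abs_pos.2 ht
  set N := ∫⁻ x, ‖f x‖ₑ ^ (r / (r - 1)) ∂weightMeasure a with hNdef
  have hAeq : kernelAmplitude a t * (besselEntire ((a - 1) / 2) 0 + 1) =
      κ * |t| ^ (-(a + 1) / 2) := by
    rw [kernelAmplitude, hκ, Real.mul_rpow two_pos.le ht'.le]
    ring
  have hmeas : StronglyMeasurable (Function.uncurry (propagatorKernel a t)) :=
    ((measurable_propagatorKernel ha).comp measurable_prodMk_left).stronglyMeasurable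
  have key := lintegral_enorm_integral_kernel_rpow_le (weightMeasure a) hmeas
    (A := ENNReal.ofReal (κ * |t| ^ (-(a + 1) / 2)))
    (by rw [Ne, ENNReal.ofReal_eq_zero, not_le]; positivity) ENNReal.ofReal_ne_top
    (fun x y => by
      rw [← ofReal_norm, ← hAeq]
      exact ENNReal.ofReal_le_ofReal (norm_propagatorKernel_le ha t x y))
    (fun g hg hgi => lintegral_propagator_sq_le ha ht hg hgi) hr hf hfi hN
  refine (ENNReal.rpow_le_rpow key (by positivity : (0 : ℝ) ≤ 1 / r)).trans (le_of_eq ?_)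
  have hNpow : N ^ ((r - 2) * (1 / r)) * N ^ (1 / r) = N ^ (1 / (r / (r - 1))) := by
    rw [← ENNReal.rpow_add_of_nonneg _ _ (by positivity) (by positivity)]
    congr 1
    field_simp
    ring
  have hApow : ENNReal.ofReal (κ * |t| ^ (-(a + 1) / 2)) ^ ((r - 2) * (1 / r)) =
      ENNReal.ofReal (κ ^ ((r - 2) / r)) * ENNReal.ofReal (|t| ^ (-(2 / q))) := by
    rw [ENNReal.ofReal_rpow_of_nonneg (by positivity) (by positivity),
      Real.mul_rpow hκ0.le (by positivity), ENNReal.ofReal_mul (by positivity),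
      ← Real.rpow_mul ht'.le, hqr]
    congr 4
    · ring
    · field_simp
  rw [ENNReal.mul_rpow_of_nonneg _ _ (by positivity), ENNReal.mul_rpow_of_nonneg _ _ (by positivity),
    ← ENNReal.rpow_mul, ENNReal.mul_rpow_of_nonneg _ _ (by positivity), hApow, ← hNpow]
  ring

lemma Admissible.two_lt {a q r : ℝ} (ha : 0 ≤ a) (h : Admissible a q r) : 2 < q := by
  obtain ⟨hr, hra, hqr⟩ := h
  have hr0 : 0 < r := by linarith
  have hlt : (a + 1) * (r - 2) < 2 * r := by
    rcases le_or_gt a 1 with h1 | h1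
    · nlinarith
    · have := hra h1
      rw [lt_div_iff₀ (by linarith)] at this
      nlinarith
  have hX : 2 / q = (a + 1) * (r - 2) / (2 * r) := by
    rw [hqr]; field_simp
  have hX0 : 0 < 2 / q := by
    rw [hX]
    have : 0 < r - 2 := by linarith
    positivity
  have hq : 0 < q := by
    by_contra hq
    exact absurd hX0 (not_lt.2 (div_nonpos_of_nonneg_of_nonpos two_pos.le (not_lt.1 hq)))
  have hX1 : 2 / q < 1 := by rw [hX, div_lt_one (by positivity)]; exact hlt
  rwa [div_lt_one hq] at hX1

lemma LrA_nonneg (a r : ℝ) (f : ℝ → ℂ) : 0 ≤ LrA a r f :=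
  Real.rpow_nonneg (setIntegral_nonneg measurableSet_Ioi fun x (hx : 0 < x) => by positivity) _

lemma mixedNorm_nonneg (a q r : ℝ) (u : ℝ → ℝ → ℂ) : 0 ≤ mixedNorm a q r u :=
  Real.rpow_nonneg (integral_nonneg fun _ => Real.rpow_nonneg (LrA_nonneg _ _ _) _) _

lemma ofReal_LrA_le {a r : ℝ} (hr : 0 < r) (f : ℝ → ℂ) :
    ENNReal.ofReal (LrA a r f) ≤ (∫⁻ x, ‖f x‖ₑ ^ r ∂weightMeasure a) ^ (1 / r) := by
  have h0 : 0 ≤ ∫ x in Ioi (0 : ℝ), ‖f x‖ ^ r * x ^ a :=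
    setIntegral_nonneg measurableSet_Ioi fun x (hx : 0 < x) => by positivity
  rw [LrA, ← ENNReal.ofReal_rpow_of_nonneg h0 (by positivity), lintegral_weightMeasure]
  refine ENNReal.rpow_le_rpow ?_ (by positivity)
  rw [← Real.enorm_of_nonneg h0]
  refine (enorm_integral_le_lintegral_enorm _).trans (le_of_eq ?_)
  refine setLIntegral_congr_fun measurableSet_Ioi fun x (hx : 0 < x) => ?_
  rw [Real.enorm_of_nonneg (by positivity), mul_comm, ENNReal.ofReal_mul (by positivity),
    ← ENNReal.ofReal_rpow_of_nonneg (norm_nonneg _) hr.le, ofReal_norm]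

lemma ofReal_mixedNorm_le {a q r : ℝ} (hq : 0 < q) (hr : 0 < r) (u : ℝ → ℝ → ℂ) :
    ENNReal.ofReal (mixedNorm a q r u) ≤
      (∫⁻ t, ((∫⁻ x, ‖u x t‖ₑ ^ r ∂weightMeasure a) ^ (1 / r)) ^ q) ^ (1 / q) := by
  have h0 : 0 ≤ ∫ t : ℝ, LrA a r (fun x => u x t) ^ q :=
    integral_nonneg fun _ => Real.rpow_nonneg (LrA_nonneg _ _ _) _
  rw [mixedNorm, ← ENNReal.ofReal_rpow_of_nonneg h0 (by positivity)]
  refine ENNReal.rpow_le_rpow ?_ (by positivity)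
  rw [← Real.enorm_of_nonneg h0]
  refine (enorm_integral_le_lintegral_enorm _).trans (lintegral_mono fun t => ?_)
  rw [Real.enorm_of_nonneg (Real.rpow_nonneg (LrA_nonneg _ _ _) _),
    ← ENNReal.ofReal_rpow_of_nonneg (LrA_nonneg _ _ _) hq.le]
  exact ENNReal.rpow_le_rpow (ofReal_LrA_le hr _) hq.le

lemma ofReal_LrA_eq {a r : ℝ} (hr : 0 < r) {f g : ℝ → ℂ} (hg : Measurable g)
    (hfg : ∀ x, 0 < x → f x = g x) (hfin : ∫⁻ x, ‖g x‖ₑ ^ r ∂weightMeasure a ≠ ∞) :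
    ENNReal.ofReal (LrA a r f) = (∫⁻ x, ‖g x‖ₑ ^ r ∂weightMeasure a) ^ (1 / r) := by
  have h1 : ∫ x in Ioi (0 : ℝ), ‖f x‖ ^ r * x ^ a =
      (∫⁻ x, ‖g x‖ₑ ^ r ∂weightMeasure a).toReal := by
    have h2 : ∫ x, ‖g x‖ ^ r ∂weightMeasure a = (∫⁻ x, ‖g x‖ₑ ^ r ∂weightMeasure a).toReal := by
      rw [integral_eq_lintegral_of_nonneg_ae (.of_forall fun x => by positivity)
        (hg.norm.pow_const r).aestronglyMeasurable]
      simp only [← ENNReal.ofReal_rpow_of_nonneg (norm_nonneg _) hr.le, ofReal_norm]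
    rw [← h2, integral_weightMeasure]
    refine setIntegral_congr_fun measurableSet_Ioi fun x hx => ?_
    simp only [hfg x hx, smul_eq_mul, mul_comm]
  rw [LrA, h1, ← ENNReal.ofReal_rpow_of_nonneg ENNReal.toReal_nonneg (by positivity),
    ENNReal.ofReal_toReal hfin]

lemma ofReal_mixedNorm_eq {a q r : ℝ} (hq : 0 < q) (hr : 0 < r) {u : ℝ → ℝ → ℂ}
    {G : ℝ × ℝ → ℂ} (hG : Measurable G) (huG : ∀ x, 0 < x → ∀ t, u x t = G (x, t))
    (hfin : ∀ t, ∫⁻ x, ‖G (x, t)‖ₑ ^ r ∂weightMeasure a ≠ ∞)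
    (hfin' : ∫⁻ t, ((∫⁻ x, ‖G (x, t)‖ₑ ^ r ∂weightMeasure a) ^ (1 / r)) ^ q ≠ ∞) :
    ENNReal.ofReal (mixedNorm a q r u) =
      (∫⁻ t, ((∫⁻ x, ‖G (x, t)‖ₑ ^ r ∂weightMeasure a) ^ (1 / r)) ^ q) ^ (1 / q) := by
  have hL : ∀ t, ENNReal.ofReal (LrA a r (fun x => u x t)) =
      (∫⁻ x, ‖G (x, t)‖ₑ ^ r ∂weightMeasure a) ^ (1 / r) := fun t =>
    ofReal_LrA_eq hr (hG.comp measurable_prodMk_right) (fun x hx => huG x hx t) (hfin t)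
  have hHm : Measurable fun t => (∫⁻ x, ‖G (x, t)‖ₑ ^ r ∂weightMeasure a) ^ (1 / r) :=
    (hG.enorm.pow_const r).lintegral_prod_left'.pow_const _
  have hLm : Measurable fun t => LrA a r (fun x => u x t) := by
    have : (fun t => LrA a r (fun x => u x t)) = fun t =>
        ((∫⁻ x, ‖G (x, t)‖ₑ ^ r ∂weightMeasure a) ^ (1 / r)).toReal := by
      ext t
      rw [← hL, ENNReal.toReal_ofReal (LrA_nonneg _ _ _)]
    rw [this]
    exact hHm.ennreal_toReal
  have h1 : ∫ t : ℝ, LrA a r (fun x => u x t) ^ q =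
      (∫⁻ t, ((∫⁻ x, ‖G (x, t)‖ₑ ^ r ∂weightMeasure a) ^ (1 / r)) ^ q).toReal := by
    rw [integral_eq_lintegral_of_nonneg_ae
      (.of_forall fun t => Real.rpow_nonneg (LrA_nonneg _ _ _) _)
      (hLm.pow_const q).aestronglyMeasurable]
    simp only [← ENNReal.ofReal_rpow_of_nonneg (LrA_nonneg _ _ _) hq.le, hL]
  rw [mixedNorm, h1, ← ENNReal.ofReal_rpow_of_nonneg ENNReal.toReal_nonneg (by positivity),
    ENNReal.ofReal_toReal hfin']

/-- Functions in `𝕊⁺` decay like integrable product weights. -/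
lemma SPlusT.exists_decay {F : ℝ → ℝ → ℂ} (hF : SPlusT F) {a : ℝ} (ha : 0 ≤ a) :
    ∃ C : ℝ, 0 ≤ C ∧ ∀ x > (0 : ℝ), ∀ t : ℝ,
      ‖F x t‖ ≤ C * ((1 + x ^ 2) ^ (-((a + 2) / 2)) * (1 + t ^ 2)⁻¹) := by
  obtain ⟨n, hn⟩ := exists_nat_ge (2 * (a + 2))
  obtain ⟨C, hC⟩ := hF.2 n
  have hC' : ∀ x > (0 : ℝ), ∀ t : ℝ, (1 + x ^ 2 + t ^ 2) ^ ((n : ℝ) / 2) * ‖F x t‖ ≤ C := by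
    intro x hx t
    have := hC 0 0 (Nat.zero_le _) x hx t
    simpa only [DxIter, DtIter, iteratedDeriv_zero] using this
  refine ⟨C, le_trans (by positivity) (hC' 1 one_pos 0), fun x hx t => ?_⟩
  have hs1 : 1 ≤ 1 + x ^ 2 + t ^ 2 := by nlinarith [sq_nonneg x, sq_nonneg t]
  have hx1 : 0 < 1 + x ^ 2 := by positivity
  have ht1 : 1 ≤ 1 + t ^ 2 := by nlinarith [sq_nonneg t]
  have hw : (1 + x ^ 2) ^ ((a + 2) / 2) * (1 + t ^ 2) ≤ (1 + x ^ 2 + t ^ 2) ^ ((n : ℝ) / 2) := by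
    calc (1 + x ^ 2) ^ ((a + 2) / 2) * (1 + t ^ 2)
        ≤ (1 + x ^ 2 + t ^ 2) ^ ((a + 2) / 2) * (1 + x ^ 2 + t ^ 2) ^ ((a + 2) / 2) := by
          refine mul_le_mul (Real.rpow_le_rpow hx1.le (by nlinarith [sq_nonneg t])
            (by linarith)) ?_ (by positivity) (by positivity)
          calc 1 + t ^ 2 ≤ 1 + x ^ 2 + t ^ 2 := by nlinarith [sq_nonneg x]
            _ = (1 + x ^ 2 + t ^ 2) ^ (1 : ℝ) := (Real.rpow_one _).symm
            _ ≤ _ := Real.rpow_le_rpow_of_exponent_le hs1 (by linarith)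
      _ = (1 + x ^ 2 + t ^ 2) ^ (a + 2) := by
          rw [← Real.rpow_add (by positivity)]; ring_nf
      _ ≤ _ := Real.rpow_le_rpow_of_exponent_le hs1 (by linarith)
  have hmul : (1 + x ^ 2) ^ ((a + 2) / 2) * (1 + t ^ 2) * ‖F x t‖ ≤ C :=
    (mul_le_mul_of_nonneg_right hw (norm_nonneg _)).trans (hC' x hx t)
  rw [Real.rpow_neg hx1.le, ← mul_inv, ← div_eq_mul_inv, le_div_iff₀ (by positivity)]
  linarith

lemma integrable_japanese_weightMeasure {a : ℝ} (ha : 0 ≤ a) :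
    Integrable (fun x : ℝ => (1 + x ^ 2) ^ (-((a + 2) / 2))) (weightMeasure a) := by
  rw [integrable_weightMeasure_iff]
  refine (integrable_inv_one_add_sq.integrableOn (s := Ioi 0)).mono' ?_ ?_
  · exact (Measurable.aestronglyMeasurable (by fun_prop))
  · refine (ae_restrict_mem measurableSet_Ioi).mono fun x (hx : 0 < x) => ?_
    have h1 : 0 < 1 + x ^ 2 := by positivity
    rw [smul_eq_mul, Real.norm_of_nonneg (by positivity)]
    have h2 : x ^ a ≤ (1 + x ^ 2) ^ (a / 2) := by
      calc x ^ a = (x ^ 2) ^ (a / 2) := by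
            rw [← Real.rpow_two, ← Real.rpow_mul hx.le]; ring_nf
        _ ≤ _ := Real.rpow_le_rpow (by positivity) (by linarith) (by positivity)
    calc x ^ a * (1 + x ^ 2) ^ (-((a + 2) / 2))
        ≤ (1 + x ^ 2) ^ (a / 2) * (1 + x ^ 2) ^ (-((a + 2) / 2)) := by gcongr
      _ = (1 + x ^ 2)⁻¹ := by
          rw [← Real.rpow_add h1, ← Real.rpow_neg_one]; ring_nf

/-- A measurable function dominated by the product weights has finite mixed norms. -/
lemma mixed_lintegral_finite {a q r : ℝ} (ha : 0 ≤ a) (hq : 1 ≤ q) (hr : 1 ≤ r)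
    {G : ℝ × ℝ → ℂ} {C : ℝ} (hC : 0 ≤ C)
    (hGC : ∀ x > (0 : ℝ), ∀ t : ℝ,
      ‖G (x, t)‖ ≤ C * ((1 + x ^ 2) ^ (-((a + 2) / 2)) * (1 + t ^ 2)⁻¹)) :
    (∀ t, ∫⁻ x, ‖G (x, t)‖ₑ ^ r ∂weightMeasure a ≠ ∞) ∧
      ∫⁻ t, ((∫⁻ x, ‖G (x, t)‖ₑ ^ r ∂weightMeasure a) ^ (1 / r)) ^ q ≠ ∞ := by
  have hr0 : 0 < r := by linarith
  have hq0 : 0 < q := by linarith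
  set W := ∫⁻ x, ENNReal.ofReal ((1 + x ^ 2) ^ (-((a + 2) / 2))) ∂weightMeasure a with hW
  have hWt : W ≠ ∞ := by
    have := (integrable_japanese_weightMeasure ha).lintegral_lt_top
    exact this.ne
  have hpt : ∀ t, ∀ x > (0 : ℝ), ‖G (x, t)‖ₑ ^ r ≤
      ENNReal.ofReal (C * (1 + t ^ 2)⁻¹) ^ r *
        ENNReal.ofReal ((1 + x ^ 2) ^ (-((a + 2) / 2))) := by
    intro t x hx
    have hw0 : 0 ≤ (1 + x ^ 2) ^ (-((a + 2) / 2)) := by positivity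
    have hw1 : (1 + x ^ 2) ^ (-((a + 2) / 2)) ≤ 1 :=
      Real.rpow_le_one_of_one_le_of_nonpos (by nlinarith [sq_nonneg x]) (by linarith)
    calc ‖G (x, t)‖ₑ ^ r
        ≤ (ENNReal.ofReal (C * (1 + t ^ 2)⁻¹) *
            ENNReal.ofReal ((1 + x ^ 2) ^ (-((a + 2) / 2)))) ^ r := by
          refine ENNReal.rpow_le_rpow ?_ hr0.le
          rw [← ofReal_norm, ← ENNReal.ofReal_mul (by positivity)]
          refine ENNReal.ofReal_le_ofReal ((hGC x hx t).trans (le_of_eq (by ring)))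
      _ ≤ _ := by
          rw [ENNReal.mul_rpow_of_nonneg _ _ hr0.le]
          gcongr
          conv_rhs => rw [← ENNReal.rpow_one (ENNReal.ofReal _)]
          exact ENNReal.rpow_le_rpow_of_exponent_ge (by simpa using hw1) hr
  have hH : ∀ t, ∫⁻ x, ‖G (x, t)‖ₑ ^ r ∂weightMeasure a ≤
      ENNReal.ofReal (C * (1 + t ^ 2)⁻¹) ^ r * W := by
    intro t
    rw [hW, ← lintegral_const_mul' _ _ (ENNReal.rpow_ne_top_of_nonneg hr0.le ENNReal.ofReal_ne_top)]
    exact lintegral_mono_ae ((ae_weightMeasure_pos a).mono fun x hx => hpt t x hx)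
  refine ⟨fun t => ne_top_of_le_ne_top (ENNReal.mul_ne_top
    (ENNReal.rpow_ne_top_of_nonneg hr0.le ENNReal.ofReal_ne_top) hWt) (hH t), ?_⟩
  set E : ℝ≥0∞ := (ENNReal.ofReal C * W ^ (1 / r)) ^ q with hE
  have hEt : E ≠ ∞ := ENNReal.rpow_ne_top_of_nonneg hq0.le (ENNReal.mul_ne_top
    ENNReal.ofReal_ne_top (ENNReal.rpow_ne_top_of_nonneg (by positivity) hWt))
  have hbound : ∀ t : ℝ, ((∫⁻ x, ‖G (x, t)‖ₑ ^ r ∂weightMeasure a) ^ (1 / r)) ^ q ≤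
      E * ENNReal.ofReal ((1 + t ^ 2)⁻¹) := by
    intro t
    have hv1 : (1 + t ^ 2)⁻¹ ≤ 1 := inv_le_one_of_one_le₀ (by nlinarith [sq_nonneg t])
    calc ((∫⁻ x, ‖G (x, t)‖ₑ ^ r ∂weightMeasure a) ^ (1 / r)) ^ q
        ≤ ((ENNReal.ofReal (C * (1 + t ^ 2)⁻¹) ^ r * W) ^ (1 / r)) ^ q := by
          gcongr
          exact hH t
      _ = E * ENNReal.ofReal ((1 + t ^ 2)⁻¹) ^ q := by
          rw [ENNReal.mul_rpow_of_nonneg _ _ (by positivity), ← ENNReal.rpow_mul,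
            mul_one_div_cancel hr0.ne', ENNReal.rpow_one, ENNReal.ofReal_mul hC, mul_right_comm,
            ENNReal.mul_rpow_of_nonneg _ _ hq0.le]
      _ ≤ _ := by
          gcongr
          conv_rhs => rw [← ENNReal.rpow_one (ENNReal.ofReal _)]
          exact ENNReal.rpow_le_rpow_of_exponent_ge (by simpa using hv1) hq
  refine ne_top_of_le_ne_top ?_ (lintegral_mono hbound)
  rw [lintegral_const_mul' _ _ hEt]
  exact ENNReal.mul_ne_top hEt integrable_inv_one_add_sq.lintegral_lt_top.ne

/-- The mixed-norm estimate for the space-time superposition of propagators. -/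
lemma exists_mixed_lintegral_propagator_le {a q r : ℝ} (ha : 0 ≤ a) (hadm : Admissible a q r) :
    ∃ C : ℝ≥0∞, C ≠ ∞ ∧ ∀ G : ℝ × ℝ → ℂ, Measurable G →
      (∀ τ, Integrable (fun y => G (y, τ)) (weightMeasure a)) →
      (∀ τ, ∫⁻ y, ‖G (y, τ)‖ₑ ^ (r / (r - 1)) ∂weightMeasure a ≠ ∞) →
      ∫⁻ τ, ((∫⁻ y, ‖G (y, τ)‖ₑ ^ (r / (r - 1)) ∂weightMeasure a) ^ (1 / (r / (r - 1)))) ^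
        (q / (q - 1)) ≠ ∞ →
      (∫⁻ t, ((∫⁻ x, (∫⁻ τ, ‖∫ y, propagatorKernel a (t - τ) x y * G (y, τ)
        ∂weightMeasure a‖ₑ) ^ r ∂weightMeasure a) ^ (1 / r)) ^ q) ^ (1 / q) ≤
      C * (∫⁻ τ, ((∫⁻ y, ‖G (y, τ)‖ₑ ^ (r / (r - 1)) ∂weightMeasure a) ^
        (1 / (r / (r - 1)))) ^ (q / (q - 1))) ^ (1 / (q / (q - 1))) := by
  have hq := hadm.two_lt ha
  have hr : 2 < r := hadm.1
  have hq0 : 0 < q := by linarith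
  have hr0 : 0 < r := by linarith
  obtain ⟨D, hD, hdisp⟩ := exists_propagator_dispersive ha hr hadm.2.2
  obtain ⟨K, hK, hhls⟩ := exists_lintegral_fractionalIntegral_rpow_le hq
  refine ⟨D * K, ENNReal.mul_ne_top hD hK, fun G hG hGi hGf hGm => ?_⟩
  set h : ℝ → ℝ≥0∞ := fun τ =>
    (∫⁻ y, ‖G (y, τ)‖ₑ ^ (r / (r - 1)) ∂weightMeasure a) ^ (1 / (r / (r - 1))) with hh
  have hhm : Measurable h := (hG.enorm.pow_const _).lintegral_prod_left'.pow_const _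
  have hspace : ∀ t : ℝ, (∫⁻ x, (∫⁻ τ, ‖∫ y, propagatorKernel a (t - τ) x y * G (y, τ)
      ∂weightMeasure a‖ₑ) ^ r ∂weightMeasure a) ^ (1 / r) ≤
      D * ∫⁻ τ, ENNReal.ofReal (|t - τ| ^ (-(2 / q))) * h τ := by
    intro t
    have hV : Measurable (Function.uncurry fun x τ =>
        ‖∫ y, propagatorKernel a (t - τ) x y * G (y, τ) ∂weightMeasure a‖ₑ) := by
      have hm : Measurable fun z : (ℝ × ℝ) × ℝ =>
          propagatorKernel a (t - z.1.2) z.1.1 z.2 * G (z.2, z.1.2) :=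
        ((measurable_propagatorKernel ha).comp (by fun_prop :
          Measurable fun z : (ℝ × ℝ) × ℝ => (t - z.1.2, z.1.1, z.2))).mul
          (hG.comp (by fun_prop))
      exact hm.stronglyMeasurable.integral_prod_right'.enorm
    refine (lintegral_rpow_lintegral_le (weightMeasure a) volume hV (by linarith)).trans ?_
    rw [← lintegral_const_mul' _ _ hD]
    refine lintegral_mono fun τ => ?_
    by_cases hτ : t - τ = 0
    · have h0 : ∀ x y, propagatorKernel a (t - τ) x y = 0 := fun x y => by
        rw [hτ, propagatorKernel, kernelAmplitude_zero ha]
        simp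
      simp [h0, ENNReal.zero_rpow_of_pos hr0, hr0]
    · exact hdisp (t - τ) hτ (fun y => G (y, τ))
        (hG.comp measurable_prodMk_right).stronglyMeasurable (hGi τ) (hGf τ)
  calc _ ≤ (∫⁻ t : ℝ, (D * ∫⁻ τ, ENNReal.ofReal (|t - τ| ^ (-(2 / q))) * h τ) ^ q) ^ (1 / q) := by
        gcongr with t
        exact hspace t
    _ = D * (∫⁻ t : ℝ, (∫⁻ τ, ENNReal.ofReal (|t - τ| ^ (-(2 / q))) * h τ) ^ q) ^ (1 / q) := by
        simp only [ENNReal.mul_rpow_of_nonneg _ _ hq0.le]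
        rw [lintegral_const_mul' _ _ (ENNReal.rpow_ne_top_of_nonneg hq0.le hD),
          ENNReal.mul_rpow_of_nonneg _ _ (by positivity), ← ENNReal.rpow_mul,
          mul_one_div_cancel hq0.ne', ENNReal.rpow_one]
    _ ≤ D * (K * (∫⁻ τ, h τ ^ (q / (q - 1))) ^ (1 / (q / (q - 1)))) := by
        gcongr
        exact hhls h hhm hGm
    _ = _ := by rw [mul_assoc]

/-- `T_a^⋆T_a` estimate: for `a ≥ 0` and an `a`-admissible pair `(q,r)`,
`‖T_a^⋆T_a(F)‖_{L^q_t L^r_a} ≤ C(a,r) ‖F‖_{L^{q'}_t L^{r'}_a}` for `F ∈ 𝕊⁺`. -/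
theorem TstarT_estimate (a q r : ℝ) (ha : 0 ≤ a) (hadm : Admissible a q r) :
    ∃ C > (0:ℝ), ∀ F : ℝ → ℝ → ℂ, SPlusT F →
      mixedNorm a q r (fun x t =>
          ∫ τ : ℝ, ∫ y in Ioi (0:ℝ), Skernel a x y (t - τ) * F y τ * ((y ^ a : ℝ) : ℂ)) ≤
        C * mixedNorm a (q / (q - 1)) (r / (r - 1)) F := by
  have hq := hadm.two_lt ha
  have hr : 2 < r := hadm.1
  have hq0 : 0 < q := by linarith
  have hr0 : 0 < r := by linarith
  have hq1 : 1 ≤ q / (q - 1) := by rw [le_div_iff₀ (by linarith)]; linarith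
  have hr1 : 1 ≤ r / (r - 1) := by rw [le_div_iff₀ (by linarith)]; linarith
  obtain ⟨K, hK, hmain⟩ := exists_mixed_lintegral_propagator_le ha hadm
  refine ⟨K.toReal + 1, by positivity, fun F hF => ?_⟩
  set u : ℝ → ℝ → ℂ := fun x t =>
    ∫ τ : ℝ, ∫ y in Ioi (0:ℝ), Skernel a x y (t - τ) * F y τ * ((y ^ a : ℝ) : ℂ) with hu
  classical
  set G : ℝ × ℝ → ℂ :=
    (Ioi (0 : ℝ) ×ˢ (univ : Set ℝ)).piecewise (fun p => F p.1 p.2) (fun _ => 0) with hGdef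
  have hFG : ∀ x, 0 < x → ∀ t, F x t = G (x, t) := fun x hx t =>
    (piecewise_eq_of_mem (Ioi (0 : ℝ) ×ˢ (univ : Set ℝ)) (fun p : ℝ × ℝ => F p.1 p.2)
      (fun _ => 0) (⟨hx, mem_univ t⟩ : (x, t) ∈ Ioi (0 : ℝ) ×ˢ (univ : Set ℝ))).symm
  have hG : Measurable G := hF.1.continuousOn.measurable_piecewise continuousOn_const
    (measurableSet_Ioi.prod MeasurableSet.univ)
  obtain ⟨C, hC, hdecay⟩ := hF.exists_decay ha
  have hGC : ∀ x > (0 : ℝ), ∀ t : ℝ,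
      ‖G (x, t)‖ ≤ C * ((1 + x ^ 2) ^ (-((a + 2) / 2)) * (1 + t ^ 2)⁻¹) := fun x hx t => by
    rw [← hFG x hx t]
    exact hdecay x hx t
  obtain ⟨hfin, hfin'⟩ := mixed_lintegral_finite ha hq1 hr1 hC hGC
  have hGi : ∀ τ, Integrable (fun y => G (y, τ)) (weightMeasure a) := fun τ =>
    (((integrable_japanese_weightMeasure ha).mul_const ((1 + τ ^ 2)⁻¹)).const_mul C).mono'
      (hG.comp measurable_prodMk_right).aestronglyMeasurable
      ((ae_weightMeasure_pos a).mono fun x hx => hGC x hx τ)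
  have hinner : ∀ x, 0 < x → ∀ t τ : ℝ,
      ∫ y in Ioi (0:ℝ), Skernel a x y (t - τ) * F y τ * ((y ^ a : ℝ) : ℂ) =
        ∫ y, propagatorKernel a (t - τ) x y * G (y, τ) ∂weightMeasure a := by
    intro x hx t τ
    rw [integral_weightMeasure]
    refine setIntegral_congr_fun measurableSet_Ioi fun y hy => ?_
    simp only [Skernel_eq_propagatorKernel ha hx hy, hFG y hy, Complex.real_smul]
    ring
  have hle : ENNReal.ofReal (mixedNorm a q r u) ≤
      K * ENNReal.ofReal (mixedNorm a (q / (q - 1)) (r / (r - 1)) F) := by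
    rw [ofReal_mixedNorm_eq (by linarith) (by linarith) hG hFG hfin hfin']
    refine (ofReal_mixedNorm_le hq0 hr0 u).trans (le_trans ?_ (hmain G hG hGi hfin hfin'))
    gcongr 3 with t
    refine ENNReal.rpow_le_rpow ?_ (by positivity)
    refine lintegral_mono_ae ((ae_weightMeasure_pos a).mono fun x hx => ?_)
    refine ENNReal.rpow_le_rpow ?_ hr0.le
    simp only [hu, hinner x hx t]
    exact enorm_integral_le_lintegral_enorm _
  rw [← ENNReal.ofReal_toReal hK, ← ENNReal.ofReal_mul ENNReal.toReal_nonneg,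
    ENNReal.ofReal_le_ofReal_iff (mul_nonneg ENNReal.toReal_nonneg (mixedNorm_nonneg _ _ _ _))] at hle
  nlinarith [mixedNorm_nonneg a (q / (q - 1)) (r / (r - 1)) F]
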